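/- Let d ≥ 1, let α = (α_1,…,α_d) be a multi-index with α_j > −1/2 for each j, and let 1 ≤ λ < β. Let k be the smallest integer greater than λ and n the smallest integer greater than β, and set c_λ^k = ∫_0^∞ u^{−λ−1}(e^{−u}−1)^k du (finite). Define the Laguerre fractional derivative D_λ^α f(x) = (1/c_λ^k) ∫_0^∞ s^{−λ−1} Σ_{j=0}^k binom(k,j) (−1)^j P_{(k−j)s}^α f(x) ds, with the convention P_0^α f = f. Then there exists C > 0, depending only on α, d, β, λ, such that for every bounded measurable f on (0,∞)^d satisfying sup_x |∂^n_t P_t^α f(x)| ≤ A t^{β−n} for all t > 0, one has: sup_x |D_λ^α f(x)| ≤ C (∥f∥_∞ + A), and sup_x |∂^n_t P_t^α(D_λ^α f)(x)| ≤ C (∥f∥_∞ + A) t^{β−λ−n} for all t > 0. In particular D_λ^α maps Lip_β(μ_α) boundedly into Lip_{β−λ}(μ_α). -/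

import Mathlib

open MeasureTheory Real Set

noncomputable def besselI (ν z : ℝ) : ℝ :=
  ∑' m : ℕ, (z / 2) ^ (2 * (m : ℝ) + ν) / (Nat.factorial m * Real.Gamma ((m : ℝ) + ν + 1))

/-- The positive orthant `(0,∞)^d`. -/
def posOrthant (d : ℕ) : Set (Fin d → ℝ) := Set.univ.pi fun _ => Set.Ioi 0

/-- The Poisson–Laguerre kernel `p_t^α(x,y)`. -/
noncomputable def plKernel (d : ℕ) (α : Fin d → ℝ) (t : ℝ) (x y : Fin d → ℝ) : ℝ :=
  (1 / (2 * Real.sqrt π)) *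
    ∫ r in Set.Ioo (0 : ℝ) 1,
      (t * Real.exp (t ^ 2 / (4 * Real.log r)) /
          ((1 - r) ^ d * (-Real.log r) ^ ((3 : ℝ) / 2))) *
        (∏ j, (y j / x j) ^ (α j / 2) *
            Real.exp (-((r * x j + y j) / (1 - r)) - α j * Real.log r / 2) *
            besselI (α j) (2 * Real.sqrt (r * x j * y j) / (1 - r))) / r

/-- The Poisson–Laguerre semigroup `P_t^α f`, with the convention `P_0^α f = f`. -/
noncomputable def plP (d : ℕ) (α : Fin d → ℝ) (t : ℝ)
    (f : (Fin d → ℝ) → ℝ) (x : Fin d → ℝ) : ℝ :=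
  if t = 0 then f x else ∫ y in posOrthant d, plKernel d α t x y * f y

/-- The Laguerre fractional derivative `D_λ^α f` of order `λ`, defined via the
`k`-fold difference `(P_s^α - I)^k`. -/
noncomputable def laguerreFracDerivK (d : ℕ) (α : Fin d → ℝ) (lam : ℝ) (k : ℕ)
    (f : (Fin d → ℝ) → ℝ) (x : Fin d → ℝ) : ℝ :=
  (1 / ∫ u in Set.Ioi (0 : ℝ), u ^ (-lam - 1) * (Real.exp (-u) - 1) ^ k) *
    ∫ s in Set.Ioi (0 : ℝ), s ^ (-lam - 1) *
      ∑ j ∈ Finset.range (k + 1),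
        (k.choose j : ℝ) * (-1) ^ j * plP d α (((k - j : ℕ) : ℝ) * s) f x

/-!
The Laguerre heat measures are Poisson mixtures of products of gamma laws: the Laplace transform
characterizes them and yields the Chapman–Kolmogorov equation. The Poisson–Laguerre semigroup `P_t`
is their subordination to the one-sided `1/2`-stable law; the substitution
`r = exp (-1 / (4 v ^ 2))` turns the integral defining the kernel into this mixture. The scaling of
the stable density alone gives the smoothing estimate `|∂_t P_t f| ≤ C ‖f‖_∞ / t`.

Interpolating between `|∂_t^n P_t f| ≤ A t ^ (β - n)` and the smoothing estimate makes the `k`-fold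
differences `O (s ^ γ)` near `s = 0` for some `γ > λ`, so the integral defining `D_λ f` converges.
The difference at `s` involves the boundary value `f` itself, which agrees almost everywhere with
`lim P_t f` because `P_t` is symmetric with respect to a product of gamma laws. Therefore
`P_t D_λ f` is the same singular integral of differences of the orbit `P_t f`, started at `t`
instead of `0`. After `n` differentiations, split it at `s = t`: for `s ≤ t` the difference is
controlled by `s ^ k` times the `(n + k)`-th derivative, for `s ≥ t` by the `n`-th derivative.
-/

open Filter Topology fwdDiff
open scoped ENNReal ProbabilityTheory
open ProbabilityTheory (gammaPDF gammaPDFReal Kernel IsMarkovKernel)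

/-! ### Growth estimates from derivatives -/

section Growth

variable {F : Type*} [NormedAddCommGroup F] [NormedSpace ℝ F]

theorem norm_sub_le_sub_of_norm_deriv_le {g g' : ℝ → F} {H H' : ℝ → ℝ} {a b : ℝ} (hab : a ≤ b)
    (hg : ∀ t ∈ Icc a b, HasDerivAt g (g' t) t) (hH : ∀ t ∈ Icc a b, HasDerivAt H (H' t) t)
    (hle : ∀ t ∈ Icc a b, ‖g' t‖ ≤ H' t) : ‖g b - g a‖ ≤ H b - H a :=
  image_norm_le_of_norm_deriv_right_le_deriv_boundary' (f := fun t => g t - g a)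
    (B := fun t => H t - H a)
    (fun t ht => ((hg t ht).continuousAt.sub continuousAt_const).continuousWithinAt)
    (fun t ht => ((hg t (Ico_subset_Icc_self ht)).sub_const _).hasDerivWithinAt)
    (by simp)
    (fun t ht => ((hH t ht).continuousAt.sub continuousAt_const).continuousWithinAt)
    (fun t ht => ((hH t (Ico_subset_Icc_self ht)).sub_const _).hasDerivWithinAt)
    (fun t ht => hle t (Ico_subset_Icc_self ht)) (right_mem_Icc.2 hab)

theorem norm_sub_le_of_norm_deriv_le_rpow {g g' : ℝ → F} {B q a b : ℝ} (hq : q ≠ 0)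
    (ha : 0 < a) (hab : a ≤ b) (hg : ∀ t > 0, HasDerivAt g (g' t) t)
    (hg' : ∀ t > 0, ‖g' t‖ ≤ B * t ^ (q - 1)) :
    ‖g b - g a‖ ≤ B / q * b ^ q - B / q * a ^ q := by
  refine norm_sub_le_sub_of_norm_deriv_le (H := fun t => B / q * t ^ q) hab
    (fun t ht => hg t (ha.trans_le ht.1)) (fun t ht => ?_) (fun t ht => hg' t (ha.trans_le ht.1))
  have hpow := (hasDerivAt_rpow_const (p := q) (Or.inl (ha.trans_le ht.1).ne')).const_mul (B / q)
  rwa [← mul_assoc, div_mul_cancel₀ B hq] at hpow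

theorem norm_le_of_norm_deriv_le_rpow_of_tendsto_atTop {g g' : ℝ → F} {B q : ℝ} (hq : q < 0)
    (hg : ∀ t > 0, HasDerivAt g (g' t) t) (hg' : ∀ t > 0, ‖g' t‖ ≤ B * t ^ (q - 1))
    (hlim : Tendsto g atTop (𝓝 0)) {t : ℝ} (ht : 0 < t) : ‖g t‖ ≤ B / (-q) * t ^ q := by
  have hleft : Tendsto (fun b => ‖g b - g t‖) atTop (𝓝 ‖0 - g t‖) := (hlim.sub_const _).norm
  have hright : Tendsto (fun b : ℝ => B / q * b ^ q - B / q * t ^ q) atTop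
      (𝓝 (B / q * 0 - B / q * t ^ q)) := by
    have hpow := tendsto_rpow_neg_atTop (neg_pos.2 hq)
    rw [neg_neg] at hpow
    exact (hpow.const_mul _).sub_const _
  have hle := le_of_tendsto_of_tendsto hleft hright <| by
    filter_upwards [eventually_ge_atTop t] with b hb
    exact norm_sub_le_of_norm_deriv_le_rpow hq.ne ht hb hg hg'
  rw [zero_sub, norm_neg] at hle
  exact hle.trans_eq (by ring)

theorem exists_tendsto_nhdsGT_zero_of_norm_deriv_le_rpow [CompleteSpace F] {g g' : ℝ → F}
    {B q : ℝ} (hq : 0 < q) (hg : ∀ t > 0, HasDerivAt g (g' t) t)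
    (hg' : ∀ t > 0, ‖g' t‖ ≤ B * t ^ (q - 1)) : ∃ l, Tendsto g (𝓝[>] 0) (𝓝 l) := by
  have hφ : Tendsto (fun t : ℝ => B / q * t ^ q) (𝓝[>] 0) (𝓝 (B / q * 0 ^ q)) :=
    ((continuousAt_rpow_const 0 q (Or.inr hq.le)).const_mul _).tendsto.mono_left nhdsWithin_le_nhds
  have hdist : Tendsto (fun p : ℝ × ℝ => dist (B / q * p.1 ^ q) (B / q * p.2 ^ q))
      (𝓝[>] 0 ×ˢ 𝓝[>] 0) (𝓝 0) := by
    simpa using (hφ.comp tendsto_fst).dist (hφ.comp tendsto_snd)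
  rw [← cauchy_map_iff_exists_tendsto, cauchy_map_iff', Metric.uniformity_eq_comap_nhds_zero,
    tendsto_comap_iff]
  refine squeeze_zero' (Eventually.of_forall fun _ => dist_nonneg) ?_ hdist
  filter_upwards [prod_mem_prod self_mem_nhdsWithin self_mem_nhdsWithin] with ⟨a, b⟩ ⟨ha, hb⟩
  change dist (g a) (g b) ≤ dist (B / q * a ^ q) (B / q * b ^ q)
  wlog hab : a ≤ b generalizing a b
  · rw [dist_comm, dist_comm (B / q * _)]
    exact this b a hb ha (le_of_not_ge hab)
  · rw [dist_comm, dist_comm (B / q * _), dist_eq_norm]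
    exact (norm_sub_le_of_norm_deriv_le_rpow hq.ne' ha hab hg hg').trans (le_abs_self _)

end Growth

/-! ### Successive derivatives and iterated differences -/

section Differences

variable {F : Type*} [NormedAddCommGroup F]

theorem norm_fwdDiff_iter_le {g : ℝ → F} {B s t : ℝ} (m : ℕ) (hs : 0 ≤ s)
    (hg : ∀ τ ≥ t, ‖g τ‖ ≤ B) : ‖(Δ_[s])^[m] g t‖ ≤ 2 ^ m * B := by
  induction m generalizing t with
  | zero => simpa using hg t le_rfl
  | succ m ih =>
    rw [Function.iterate_succ_apply']
    calc ‖(Δ_[s])^[m] g (t + s) - (Δ_[s])^[m] g t‖ ≤ 2 ^ m * B + 2 ^ m * B :=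
          (norm_sub_le _ _).trans (add_le_add (ih fun τ hτ => hg τ (by linarith)) (ih hg))
      _ = 2 ^ (m + 1) * B := by ring

theorem continuousOn_fwdDiff_iter_uncurry {g : ℝ → F} (hg : ContinuousOn g (Ici 0)) (k : ℕ) :
    ContinuousOn (fun p : ℝ × ℝ => (Δ_[p.1])^[k] g p.2) (Ici 0 ×ˢ Ici 0) := by
  simp_rw [fwdDiff_iter_eq_sum_shift]
  refine continuousOn_finsetSum _ fun i _ => ContinuousOn.fun_const_smul ?_ _
  refine hg.comp (f := fun p : ℝ × ℝ => p.2 + i • p.1) (by fun_prop) ?_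
  rintro ⟨s, t⟩ ⟨hs, ht⟩
  exact add_nonneg ht (nsmul_nonneg (mem_Ici.1 hs) i)

theorem continuousOn_fwdDiff_iter {g : ℝ → F} {t : ℝ} (hg : ContinuousOn g (Ici t))
    (k : ℕ) : ContinuousOn (fun s => (Δ_[s])^[k] g t) (Ici 0) := by
  simp_rw [fwdDiff_iter_eq_sum_shift]
  refine continuousOn_finsetSum _ fun i _ => ContinuousOn.fun_const_smul ?_ _
  refine hg.comp (f := fun s : ℝ => t + i • s) (by fun_prop) fun s hs => ?_
  exact le_add_of_nonneg_right (nsmul_nonneg (mem_Ici.1 hs) i)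

theorem fwdDiff_iter_update_zero (g : ℝ → F) (k : ℕ) (a : F) {s : ℝ} (hs : 0 < s) :
    (Δ_[s])^[k] (Function.update g 0 a) 0 = (Δ_[s])^[k] g 0 + ((-1 : ℤ) ^ k) • (a - g 0) := by
  have hpos (i : ℕ) : 0 + (i + 1) • s ≠ 0 := by rw [zero_add]; positivity
  simp only [fwdDiff_iter_eq_sum_shift, Finset.sum_range_succ', Function.update_of_ne (hpos _)]
  simp [smul_sub]

variable [NormedSpace ℝ F]

/-- `G 0, G 1, G 2, …` are the successive derivatives of `G 0` on `(0, ∞)`. Nothing is assumed at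
or below the origin. -/
def IsDerivTower (G : ℕ → ℝ → F) : Prop :=
  ∀ i, ∀ t > 0, HasDerivAt (G i) (G (i + 1) t) t

/-- The constant produced by integrating a bound `t ^ (γ - (m + i))` `i` times from infinity. -/
noncomputable def descentConst (γ : ℝ) (m i : ℕ) : ℝ :=
  ∏ j ∈ Finset.range i, ((m + j : ℕ) - γ)⁻¹

theorem descentConst_nonneg {γ : ℝ} {m : ℕ} (hγ : γ ≤ m) (i : ℕ) : 0 ≤ descentConst γ m i :=
  Finset.prod_nonneg fun j _ => inv_nonneg.2 <| sub_nonneg.2 <|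
    hγ.trans <| by exact_mod_cast Nat.le_add_right m j

namespace IsDerivTower

variable {G : ℕ → ℝ → F} {B q s t : ℝ}

theorem shift (hG : IsDerivTower G) (n : ℕ) : IsDerivTower fun i => G (n + i) :=
  fun i => hG (n + i)

theorem continuousOn (hG : IsDerivTower G) (i : ℕ) : ContinuousOn (G i) (Ioi 0) :=
  fun t ht => (hG i t ht).continuousAt.continuousWithinAt

theorem fwdDiff (hG : IsDerivTower G) (hs : 0 ≤ s) : IsDerivTower fun i => Δ_[s] (G i) :=
  fun i t ht => ((hG i (t + s) (by linarith)).comp_add_const t s).sub (hG i t ht)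

theorem fwdDiff_iter (hG : IsDerivTower G) (hs : 0 ≤ s) (m : ℕ) :
    IsDerivTower fun i => (Δ_[s])^[m] (G i) := by
  induction m with
  | zero => exact hG
  | succ m ih => simpa only [Function.iterate_succ_apply'] using ih.fwdDiff hs

theorem iteratedDeriv_eq (hG : IsDerivTower G) {g : ℝ → F} (hg : ∀ t > 0, g t = G 0 t) (m : ℕ)
    (ht : 0 < t) : iteratedDeriv m g t = G m t := by
  induction m generalizing t with
  | zero => simpa using hg t ht
  | succ m ih =>
    have heq : iteratedDeriv m g =ᶠ[𝓝 t] G m := by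
      filter_upwards [lt_mem_nhds ht] with τ hτ using ih hτ
    rw [iteratedDeriv_succ, heq.deriv_eq, (hG m t ht).deriv]

theorem norm_fwdDiff_iter_le (hG : IsDerivTower G) (m : ℕ) (hs : 0 ≤ s) (ht : 0 < t)
    (hb : ∀ τ ≥ t, ‖G m τ‖ ≤ B) : ‖(Δ_[s])^[m] (G 0) t‖ ≤ s ^ m * B := by
  induction m generalizing G B with
  | zero => simpa using hb t le_rfl
  | succ m ih =>
    have hdiff : ∀ τ ≥ t, ‖Δ_[s] (G m) τ‖ ≤ s * B := fun τ hτ => by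
      have hmean := norm_sub_le_sub_of_norm_deriv_le (H := fun x => B * x) (H' := fun _ => B)
        (show τ ≤ τ + s by linarith) (fun x hx => hG m x (by linarith [hx.1]))
        (fun x _ => by simpa using (hasDerivAt_id x).const_mul B)
        (fun x hx => hb x (by linarith [hx.1]))
      exact hmean.trans_eq (by ring)
    rw [Function.iterate_succ_apply]
    exact (ih (hG.fwdDiff hs) hdiff).trans_eq (by ring)

theorem norm_fwdDiff_iter_succ_le (hG : IsDerivTower G) (m : ℕ) (hs : 0 ≤ s) (ht : 0 < t)
    (hq : 0 < q) (hq1 : q ≤ 1) (hB : 0 ≤ B) (hb : ∀ τ > 0, ‖G (m + 1) τ‖ ≤ B * τ ^ (q - 1)) :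
    ‖(Δ_[s])^[m + 1] (G 0) t‖ ≤ s ^ m * B / q * (t + s) ^ q := by
  have hderiv : ∀ τ > 0, ‖(Δ_[s])^[m] (G 1) τ‖ ≤ s ^ m * B * τ ^ (q - 1) := fun τ hτ => by
    have hle : ∀ x ≥ τ, ‖G (1 + m) x‖ ≤ B * τ ^ (q - 1) := fun x hx => by
      rw [add_comm 1 m]
      exact (hb x (hτ.trans_le hx)).trans (mul_le_mul_of_nonneg_left
        (rpow_le_rpow_of_nonpos hτ hx (by linarith)) hB)
    exact ((hG.shift 1).norm_fwdDiff_iter_le m hs hτ hle).trans_eq (by ring)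
  have hincr := norm_sub_le_of_norm_deriv_le_rpow hq.ne' ht (show t ≤ t + s by linarith)
    (hG.fwdDiff_iter hs m 0) hderiv
  rw [Function.iterate_succ_apply']
  exact hincr.trans (sub_le_self _ (by positivity))

theorem norm_fwdDiff_iter_succ_zero_le (hG : IsDerivTower G) (hG0 : ContinuousOn (G 0) (Ici 0))
    (m : ℕ) (hs : 0 < s) (hq : 0 < q) (hq1 : q ≤ 1) (hB : 0 ≤ B)
    (hb : ∀ τ > 0, ‖G (m + 1) τ‖ ≤ B * τ ^ (q - 1)) :
    ‖(Δ_[s])^[m + 1] (G 0) 0‖ ≤ B / q * s ^ (m + q) := by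
  have hleft : Tendsto (fun t => (Δ_[s])^[m + 1] (G 0) t) (𝓝[>] 0)
      (𝓝 ((Δ_[s])^[m + 1] (G 0) 0)) := by
    have hcont := (continuousOn_fwdDiff_iter_uncurry hG0 (m + 1)).comp
      (f := fun t : ℝ => (s, t)) (by fun_prop) fun t ht => ⟨hs.le, ht⟩
    exact (hcont 0 self_mem_Ici).tendsto.mono_left (nhdsWithin_mono _ Ioi_subset_Ici_self)
  have hright : Tendsto (fun t : ℝ => s ^ m * B / q * (t + s) ^ q) (𝓝[>] 0)
      (𝓝 (s ^ m * B / q * (0 + s) ^ q)) := by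
    refine Tendsto.mono_left (ContinuousAt.tendsto ?_) nhdsWithin_le_nhds
    exact continuousAt_const.mul ((continuousAt_id.add_const s).rpow_const (Or.inr hq.le))
  have hle := le_of_tendsto_of_tendsto hleft.norm hright <| by
    filter_upwards [self_mem_nhdsWithin] with t ht
    exact hG.norm_fwdDiff_iter_succ_le m hs.le ht hq hq1 hB hb
  refine hle.trans_eq ?_
  rw [rpow_add hs, rpow_natCast, zero_add]
  ring

theorem norm_le_descentConst_mul_rpow (hG : IsDerivTower G) {γ : ℝ} {m : ℕ} (hγ : γ < m)
    (hlim : ∀ j ≥ m, Tendsto (G j) atTop (𝓝 0)) (i : ℕ)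
    (hb : ∀ t > 0, ‖G (m + i) t‖ ≤ B * t ^ (γ - (m + i : ℕ))) (ht : 0 < t) :
    ‖G m t‖ ≤ descentConst γ m i * B * t ^ (γ - m) := by
  induction i generalizing B with
  | zero => simpa [descentConst] using hb t ht
  | succ i ih =>
    have hneg : γ - (m + i : ℕ) < 0 := by push_cast; linarith [(i.cast_nonneg : (0 : ℝ) ≤ i)]
    have hstep : ∀ t > 0, ‖G (m + i) t‖ ≤ B / -(γ - (m + i : ℕ)) * t ^ (γ - (m + i : ℕ)) := by
      refine fun t ht => norm_le_of_norm_deriv_le_rpow_of_tendsto_atTop hneg (hG (m + i))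
        (fun τ hτ => (hb τ hτ).trans_eq ?_) (hlim _ (Nat.le_add_right m i)) ht
      push_cast; ring_nf
    refine (ih hstep).trans_eq ?_
    rw [descentConst, descentConst, Finset.prod_range_succ, neg_sub]
    ring

end IsDerivTower

end Differences

/-! ### Fractional integrals of differences -/

section FracIntegral

variable {F : Type*} [NormedAddCommGroup F] [NormedSpace ℝ F] {lam p a b T : ℝ}

theorem integrableOn_Ioc_rpow_smul {f : ℝ → F} (hp : lam < p) (hT : 0 ≤ T)
    (hf : AEStronglyMeasurable f (volume.restrict (Ioc 0 T)))
    (ha : ∀ s ∈ Ioc 0 T, ‖f s‖ ≤ a * s ^ p) :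
    IntegrableOn (fun s => s ^ (-lam - 1) • f s) (Ioc 0 T) ∧
      ∫ s in Ioc 0 T, ‖s ^ (-lam - 1) • f s‖ ≤ a * (T ^ (p - lam) / (p - lam)) := by
  have hpow : IntegrableOn (fun s : ℝ => a * s ^ (p - lam - 1)) (Ioc 0 T) :=
    ((intervalIntegrable_iff_integrableOn_Ioc_of_le hT).1
      (intervalIntegral.intervalIntegrable_rpow' (by linarith))).const_mul a
  have hle : ∀ᵐ s ∂volume.restrict (Ioc 0 T),
      ‖s ^ (-lam - 1) • f s‖ ≤ a * s ^ (p - lam - 1) := by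
    refine ae_restrict_of_forall_mem measurableSet_Ioc fun s hs => ?_
    have hs0 : 0 ≤ s ^ (-lam - 1) := rpow_nonneg hs.1.le _
    calc ‖s ^ (-lam - 1) • f s‖ = s ^ (-lam - 1) * ‖f s‖ := norm_smul_of_nonneg hs0 _
      _ ≤ s ^ (-lam - 1) * (a * s ^ p) := by gcongr; exact ha s hs
      _ = a * s ^ (p - lam - 1) := by
        rw [show p - lam - 1 = (-lam - 1) + p by ring, rpow_add hs.1]; ring
  have hint : IntegrableOn (fun s => s ^ (-lam - 1) • f s) (Ioc 0 T) :=
    hpow.mono' ((measurable_id.pow_const _).aestronglyMeasurable.smul hf) hle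
  refine ⟨hint, (integral_mono_ae hint.norm hpow hle).trans_eq ?_⟩
  rw [integral_const_mul, ← intervalIntegral.integral_of_le hT,
    integral_rpow (Or.inl (by linarith)), sub_add_cancel, zero_rpow (by linarith), sub_zero]

theorem integrableOn_Ioi_rpow_smul {f : ℝ → F} (hlam : 0 < lam) (hT : 0 < T)
    (hf : AEStronglyMeasurable f (volume.restrict (Ioi T))) (hb : ∀ s ∈ Ioi T, ‖f s‖ ≤ b) :
    IntegrableOn (fun s => s ^ (-lam - 1) • f s) (Ioi T) ∧
      ∫ s in Ioi T, ‖s ^ (-lam - 1) • f s‖ ≤ b * (T ^ (-lam) / lam) := by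
  have hpow : IntegrableOn (fun s : ℝ => b * s ^ (-lam - 1)) (Ioi T) :=
    (integrableOn_Ioi_rpow_of_lt (by linarith) hT).const_mul b
  have hle : ∀ᵐ s ∂volume.restrict (Ioi T), ‖s ^ (-lam - 1) • f s‖ ≤ b * s ^ (-lam - 1) := by
    refine ae_restrict_of_forall_mem measurableSet_Ioi fun s hs => ?_
    have hs0 : 0 ≤ s ^ (-lam - 1) := rpow_nonneg (hT.trans hs).le _
    rw [norm_smul_of_nonneg hs0, mul_comm]
    exact mul_le_mul_of_nonneg_right (hb s hs) hs0
  have hint : IntegrableOn (fun s => s ^ (-lam - 1) • f s) (Ioi T) :=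
    hpow.mono' ((measurable_id.pow_const _).aestronglyMeasurable.smul hf) hle
  refine ⟨hint, (integral_mono_ae hint.norm hpow hle).trans_eq ?_⟩
  rw [integral_const_mul, integral_Ioi_rpow_of_lt (by linarith) hT, sub_add_cancel, neg_div_neg_eq]

theorem integrableOn_Ioi_zero_rpow_smul {f : ℝ → F} (hlam : 0 < lam) (hp : lam < p) (hT : 0 < T)
    (hf : AEStronglyMeasurable f (volume.restrict (Ioi 0)))
    (ha : ∀ s > 0, ‖f s‖ ≤ a * s ^ p) (hb : ∀ s > 0, ‖f s‖ ≤ b) :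
    IntegrableOn (fun s => s ^ (-lam - 1) • f s) (Ioi 0) ∧
      ∫ s in Ioi 0, ‖s ^ (-lam - 1) • f s‖ ≤
        a * (T ^ (p - lam) / (p - lam)) + b * (T ^ (-lam) / lam) := by
  obtain ⟨hint₀, hle₀⟩ := integrableOn_Ioc_rpow_smul hp hT.le
    (hf.mono_measure (Measure.restrict_mono Ioc_subset_Ioi_self le_rfl)) fun s hs => ha s hs.1
  obtain ⟨hint₁, hle₁⟩ := integrableOn_Ioi_rpow_smul hlam hT
    (hf.mono_measure (Measure.restrict_mono (Ioi_subset_Ioi hT.le) le_rfl))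
    fun s hs => hb s (hT.trans hs)
  rw [← Ioc_union_Ioi_eq_Ioi hT.le]
  refine ⟨hint₀.union hint₁, ?_⟩
  rw [setIntegral_union (Ioc_disjoint_Ioi le_rfl) measurableSet_Ioi hint₀.norm hint₁.norm]
  exact add_le_add hle₀ hle₁

theorem integrableOn_Ioi_rpow_mul_min (hlam : 0 < lam) (hp : lam < p) (ha : 0 ≤ a)
    (hb : 0 ≤ b) : IntegrableOn (fun s : ℝ => s ^ (-lam - 1) * min (a * s ^ p) b) (Ioi 0) := by
  have hnorm (s : ℝ) (hs : 0 < s) : ‖min (a * s ^ p) b‖ = min (a * s ^ p) b :=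
    norm_of_nonneg (le_min (by positivity) hb)
  exact (integrableOn_Ioi_zero_rpow_smul (f := fun s => min (a * s ^ p) b) hlam hp one_pos
    (Measurable.aestronglyMeasurable (by fun_prop))
    (fun s hs => (hnorm s hs).trans_le (min_le_left _ _))
    (fun s hs => (hnorm s hs).trans_le (min_le_right _ _))).1

theorem not_integrableOn_Ioi_zero_rpow_smul {f : ℝ → F} {c : F} (hlam : 0 ≤ lam) (hc : c ≠ 0)
    (hf : Tendsto f (𝓝[>] 0) (𝓝 c)) :
    ¬ IntegrableOn (fun s => s ^ (-lam - 1) • f s) (Ioi 0) := by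
  intro hint
  have hc' : 0 < ‖c‖ := norm_pos_iff.2 hc
  have hlarge : ∀ᶠ s in 𝓝[>] (0 : ℝ), ‖c‖ / 2 < ‖f s‖ :=
    hf.norm.eventually (lt_mem_nhds (half_lt_self hc'))
  obtain ⟨δ, hδ, hsub⟩ := mem_nhdsGT_iff_exists_Ioo_subset.1 hlarge
  have hpow : IntegrableOn (fun s : ℝ => s ^ (-lam - 1)) (Ioo 0 δ) := by
    refine ((hint.mono_set Ioo_subset_Ioi_self).norm.const_mul (2 / ‖c‖)).mono'
      (measurable_id.pow_const _).aestronglyMeasurable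
      (ae_restrict_of_forall_mem measurableSet_Ioo fun s hs => ?_)
    have hs0 : 0 ≤ s ^ (-lam - 1) := rpow_nonneg hs.1.le _
    have hfs : ‖c‖ / 2 < ‖f s‖ := hsub hs
    rw [norm_smul, norm_of_nonneg hs0]
    calc s ^ (-lam - 1) = 2 / ‖c‖ * (s ^ (-lam - 1) * (‖c‖ / 2)) := by field_simp
      _ ≤ 2 / ‖c‖ * (s ^ (-lam - 1) * ‖f s‖) := by gcongr
  rw [intervalIntegral.integrableOn_Ioo_rpow_iff hδ] at hpow
  linarith

/-- The (unnormalised) fractional derivative `∫₀^∞ s^(-λ-1) Δ_s^k g(t) ds` of order `λ` of `g` at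
`t`. It is `0` where the integral diverges. -/
noncomputable def fracIntegral (lam : ℝ) (k : ℕ) (g : ℝ → F) (t : ℝ) : F :=
  ∫ s in Ioi 0, s ^ (-lam - 1) • (Δ_[s])^[k] g t

theorem fracIntegral_update_zero_of_ne {g : ℝ → F} {c : F} (k : ℕ) (hlam : 0 ≤ lam)
    (hg : Tendsto (fun s => (Δ_[s])^[k] g 0) (𝓝[>] 0) (𝓝 0)) (hc : c ≠ g 0) :
    fracIntegral lam k (Function.update g 0 c) 0 = 0 := by
  refine integral_undef (not_integrableOn_Ioi_zero_rpow_smul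
    (c := ((-1 : ℤ) ^ k) • (c - g 0)) hlam ?_ ?_)
  · rcases neg_one_pow_eq_or ℤ k with h | h <;> simp [h, sub_ne_zero, hc, hc.symm]
  · rw [← zero_add (_ • (c - g 0))]
    refine (hg.add_const _).congr' ?_
    filter_upwards [self_mem_nhdsWithin] with s hs
    exact (fwdDiff_iter_update_zero g k c hs).symm

namespace IsDerivTower

variable {G : ℕ → ℝ → F} {γ A B M t : ℝ} {k m : ℕ}

theorem integrableOn_fracIntegral_zero (hG : IsDerivTower G) (hG0 : ContinuousOn (G 0) (Ici 0))
    (hlam : 0 < lam) (hγ : lam < γ) (hmγ : m < γ) (hγm : γ ≤ m + 1)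
    (hB : 0 ≤ B) (hb : ∀ τ > 0, ‖G (m + 1) τ‖ ≤ B * τ ^ (γ - (m + 1 : ℕ)))
    (hM : ∀ τ ≥ 0, ‖G 0 τ‖ ≤ M) :
    IntegrableOn (fun s => s ^ (-lam - 1) • (Δ_[s])^[m + 1] (G 0) 0) (Ioi 0) ∧
      ∫ s in Ioi 0, ‖s ^ (-lam - 1) • (Δ_[s])^[m + 1] (G 0) 0‖ ≤
        B / ((γ - m) * (γ - lam)) + 2 ^ (m + 1) * M / lam := by
  have hsmall : ∀ s > 0, ‖(Δ_[s])^[m + 1] (G 0) 0‖ ≤ B / (γ - m) * s ^ γ := fun s hs => by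
    have hle := hG.norm_fwdDiff_iter_succ_zero_le hG0 m hs (sub_pos.2 hmγ) (by linarith) hB
      fun τ hτ => (hb τ hτ).trans_eq (by push_cast; ring_nf)
    rwa [add_sub_cancel] at hle
  have hmeas := ((continuousOn_fwdDiff_iter hG0 (m + 1)).mono
    Ioi_subset_Ici_self).aestronglyMeasurable (μ := volume) measurableSet_Ioi
  obtain ⟨hint, hle⟩ := integrableOn_Ioi_zero_rpow_smul hlam hγ one_pos hmeas hsmall
    fun s hs => _root_.norm_fwdDiff_iter_le (m + 1) (le_of_lt hs) hM
  refine ⟨hint, hle.trans_eq ?_⟩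
  rw [one_rpow, one_rpow]
  field_simp

theorem norm_fracIntegral_update_zero_le (hG : IsDerivTower G)
    (hG0 : ContinuousOn (G 0) (Ici 0)) (hlam : 0 < lam) (hγ : lam < γ) (hmγ : m < γ)
    (hγm : γ ≤ m + 1) (hB : 0 ≤ B) (hb : ∀ τ > 0, ‖G (m + 1) τ‖ ≤ B * τ ^ (γ - (m + 1 : ℕ)))
    (hM : ∀ τ ≥ 0, ‖G 0 τ‖ ≤ M) (c : F) :
    ‖fracIntegral lam (m + 1) (Function.update (G 0) 0 c) 0‖ ≤
      B / ((γ - m) * (γ - lam)) + 2 ^ (m + 1) * M / lam := by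
  have hM0 : 0 ≤ M := (norm_nonneg _).trans (hM 0 le_rfl)
  by_cases hc : c = G 0 0
  · rw [hc, Function.update_eq_self]
    exact (norm_integral_le_integral_norm _).trans
      (hG.integrableOn_fracIntegral_zero hG0 hlam hγ hmγ hγm hB hb hM).2
  · have hzero : Tendsto (fun s => (Δ_[s])^[m + 1] (G 0) 0) (𝓝[>] 0) (𝓝 0) := by
      have hcont := (continuousOn_fwdDiff_iter hG0 (m + 1) 0 self_mem_Ici).tendsto
      have hval : (Δ_[(0 : ℝ)])^[m + 1] (G 0) 0 = 0 := by
        simp [Function.iterate_succ_apply', _root_.fwdDiff]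
      rw [hval] at hcont
      exact hcont.mono_left (nhdsWithin_mono _ Ioi_subset_Ici_self)
    rw [fracIntegral_update_zero_of_ne (m + 1) hlam.le hzero hc, norm_zero]
    have := mul_pos (sub_pos.2 hmγ) (sub_pos.2 hγ)
    positivity

theorem integrableOn_fracIntegral (hG : IsDerivTower G) (hlam : 0 < lam) (hk : lam < k)
    (ht : 0 < t) (hb : ∀ τ ≥ t, ‖G k τ‖ ≤ B) (hM : ∀ τ ≥ t, ‖G 0 τ‖ ≤ M) (hT : 0 < T) :
    IntegrableOn (fun s => s ^ (-lam - 1) • (Δ_[s])^[k] (G 0) t) (Ioi 0) ∧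
      ∫ s in Ioi 0, ‖s ^ (-lam - 1) • (Δ_[s])^[k] (G 0) t‖ ≤
        B * (T ^ (k - lam) / (k - lam)) + 2 ^ k * M * (T ^ (-lam) / lam) := by
  have hcont : ContinuousOn (G 0) (Ici t) := (hG.continuousOn 0).mono (Ici_subset_Ioi.2 ht)
  refine integrableOn_Ioi_zero_rpow_smul hlam hk hT
    (((continuousOn_fwdDiff_iter hcont k).mono Ioi_subset_Ici_self).aestronglyMeasurable
      measurableSet_Ioi) (fun s hs => ?_)
    fun s hs => _root_.norm_fwdDiff_iter_le k (le_of_lt hs) hM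
  rw [rpow_natCast, mul_comm]
  exact hG.norm_fwdDiff_iter_le k hs.le ht hb

theorem aestronglyMeasurable_rpow_smul_fwdDiff_iter (hG : IsDerivTower G) (k : ℕ) (ht : 0 < t) :
    AEStronglyMeasurable (fun s => s ^ (-lam - 1) • (Δ_[s])^[k] (G 0) t)
      (volume.restrict (Ioi 0)) :=
  (measurable_id.pow_const _).aestronglyMeasurable.smul
    (((continuousOn_fwdDiff_iter ((hG.continuousOn 0).mono (Ici_subset_Ioi.2 ht)) k).mono
      Ioi_subset_Ici_self).aestronglyMeasurable measurableSet_Ioi)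

protected theorem fracIntegral (hG : IsDerivTower G) (hlam : 0 < lam) (hk : lam < k)
    (hb : ∀ i, ∀ t > 0, ∃ B, ∀ τ ≥ t, ‖G i τ‖ ≤ B) :
    IsDerivTower fun i => fracIntegral lam k (G i) := by
  intro i t ht
  have ht2 : 0 < t / 2 := half_pos ht
  obtain ⟨A, hA⟩ := hb i t ht
  obtain ⟨A', hA'⟩ := hb (i + k) t ht
  obtain ⟨B, hB⟩ := hb (i + 1 + k) _ ht2
  obtain ⟨M, hM⟩ := hb (i + 1) _ ht2
  have hdom : ∀ s > 0, ∀ τ > t / 2,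
      ‖(Δ_[s])^[k] (G (i + 1)) τ‖ ≤ min (B * s ^ (k : ℝ)) (2 ^ k * M) := fun s hs τ hτ => by
    refine le_min ?_ (_root_.norm_fwdDiff_iter_le k hs.le fun x hx => hM x (hτ.le.trans hx))
    rw [rpow_natCast, mul_comm]
    exact (hG.shift (i + 1)).norm_fwdDiff_iter_le k hs.le (ht2.trans hτ)
      fun x hx => hB x (hτ.le.trans hx)
  have hbound := integrableOn_Ioi_rpow_mul_min hlam hk ((norm_nonneg _).trans (hB _ le_rfl))
    (mul_nonneg (by positivity : (0 : ℝ) ≤ 2 ^ k) ((norm_nonneg _).trans (hM _ le_rfl)))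
  refine (hasDerivAt_integral_of_dominated_loc_of_deriv_le (μ := volume.restrict (Ioi 0))
    (F := fun τ s => s ^ (-lam - 1) • (Δ_[s])^[k] (G i) τ)
    (F' := fun τ s => s ^ (-lam - 1) • (Δ_[s])^[k] (G (i + 1)) τ) (Ioi_mem_nhds (half_lt_self ht))
    ?_ ((hG.shift i).integrableOn_fracIntegral hlam hk ht hA' hA one_pos).1
    ((hG.shift (i + 1)).aestronglyMeasurable_rpow_smul_fwdDiff_iter k ht) ?_ hbound ?_).2
  · filter_upwards [lt_mem_nhds ht] with τ hτ using
      (hG.shift i).aestronglyMeasurable_rpow_smul_fwdDiff_iter k hτ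
  · refine ae_restrict_of_forall_mem measurableSet_Ioi fun s hs τ hτ => ?_
    rw [norm_smul_of_nonneg (rpow_nonneg (le_of_lt hs) _)]
    exact mul_le_mul_of_nonneg_left (hdom s hs τ hτ) (rpow_nonneg (le_of_lt hs) _)
  · refine ae_restrict_of_forall_mem measurableSet_Ioi fun s hs τ hτ => ?_
    exact ((hG.fwdDiff_iter (le_of_lt hs) k) i τ (ht2.trans hτ)).const_smul _

/-- Splitting the integral at `s = t` balances its two halves. -/
theorem norm_fracIntegral_le_rpow (hG : IsDerivTower G) (hlam : 0 < lam) (hk : lam < k)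
    (hγ : γ ≤ 0) (hA : 0 ≤ A) (hB : 0 ≤ B) (ha : ∀ τ > 0, ‖G 0 τ‖ ≤ A * τ ^ γ)
    (hb : ∀ τ > 0, ‖G k τ‖ ≤ B * τ ^ (γ - k)) (ht : 0 < t) :
    ‖fracIntegral lam k (G 0) t‖ ≤ (B / (k - lam) + 2 ^ k * A / lam) * t ^ (γ - lam) := by
  have hmono {c : ℝ} (hc : c ≤ 0) : ∀ τ ≥ t, τ ^ c ≤ t ^ c :=
    fun τ hτ => rpow_le_rpow_of_nonpos ht hτ hc
  have hγk : γ - k ≤ 0 := sub_nonpos.2 (hγ.trans k.cast_nonneg)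
  have hle := (hG.integrableOn_fracIntegral hlam hk ht
    (fun τ hτ => (hb τ (ht.trans_le hτ)).trans (mul_le_mul_of_nonneg_left (hmono hγk τ hτ) hB))
    (fun τ hτ => (ha τ (ht.trans_le hτ)).trans (mul_le_mul_of_nonneg_left (hmono hγ τ hτ) hA))
    ht).2
  have hnear : t ^ (γ - k) * t ^ (k - lam) = t ^ (γ - lam) := by
    rw [← rpow_add ht, sub_add_sub_cancel]
  have hfar : t ^ γ * t ^ (-lam) = t ^ (γ - lam) := by rw [← rpow_add ht, sub_eq_add_neg]
  calc ‖fracIntegral lam k (G 0) t‖ ≤ _ := (norm_integral_le_integral_norm _).trans hle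
    _ = B / (k - lam) * (t ^ (γ - k) * t ^ (k - lam)) +
        2 ^ k * A / lam * (t ^ γ * t ^ (-lam)) := by ring
    _ = (B / (k - lam) + 2 ^ k * A / lam) * t ^ (γ - lam) := by rw [hnear, hfar, add_mul]

end IsDerivTower

end FracIntegral

/-! ### Analytic Markov flows -/

section Flow

variable {E : Type*} [MeasurableSpace E]

/-- The orbit `t ↦ P_t f(x)` of a function `f` under a family of measures `P_t(x, ·)`. -/
noncomputable def flowOrbit (P : ℝ → E → Measure E) (f : E → ℝ) (x : E) (t : ℝ) : ℝ :=
  ∫ z, f z ∂P t x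

/-- A Markov semigroup `(P_t)_{t > 0}` on the bounded measurable functions which is analytic, in the
quantitative form `|∂_t P_t f| ≤ C ‖f‖_∞ / t`. -/
structure IsAnalyticFlow (P : ℝ → E → Measure E) (C : ℝ) : Prop where
  prob : ∀ t > 0, ∀ x, IsProbabilityMeasure (P t x)
  measurable : ∀ f : E → ℝ, Measurable f → Measurable fun p : ℝ × E => flowOrbit P f p.2 p.1
  comp : ∀ (f : E → ℝ) (M : ℝ), Measurable f → (∀ z, |f z| ≤ M) → ∀ s > 0, ∀ t > 0, ∀ x,
    flowOrbit P (fun y => flowOrbit P f y t) x s = flowOrbit P f x (s + t)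
  nonneg : 0 ≤ C
  deriv : ∀ (f : E → ℝ) (M : ℝ), Measurable f → (∀ z, |f z| ≤ M) → ∀ t > 0, ∀ x,
    DifferentiableAt ℝ (flowOrbit P f x) t ∧ |_root_.deriv (flowOrbit P f x) t| ≤ C * M / t

/-- A family `v x t` which the semigroup transports, `v(·, s + t) = P_s v(·, t)`, and which is of
size at most `B t ^ p`. -/
structure IsFlowOrbit (P : ℝ → E → Measure E) (B p : ℝ) (v : E → ℝ → ℝ) : Prop where
  measurable : ∀ t > 0, Measurable fun x => v x t
  shift : ∀ s > 0, ∀ t > 0, ∀ x, v x (s + t) = flowOrbit P (fun y => v y t) x s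
  bound : ∀ t > 0, ∀ x, |v x t| ≤ B * t ^ p

variable {P : ℝ → E → Measure E} {C : ℝ}

namespace IsAnalyticFlow

variable {f : E → ℝ} {M s t : ℝ}

theorem abs_flowOrbit_le (h : IsAnalyticFlow P C) (hM : ∀ z, |f z| ≤ M) (ht : 0 < t) (x : E) :
    |flowOrbit P f x t| ≤ M := by
  have := h.prob t ht x
  simpa [flowOrbit] using norm_integral_le_of_norm_le_const (μ := P t x) (f := f) (C := M)
    (Eventually.of_forall hM)

theorem isFlowOrbit (h : IsAnalyticFlow P C) (hf : Measurable f) (hM : ∀ z, |f z| ≤ M) :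
    IsFlowOrbit P M 0 (flowOrbit P f) where
  measurable _ _ := (h.measurable f hf).comp measurable_prodMk_left
  shift s hs t ht x := (h.comp f M hf hM s hs t ht x).symm
  bound t ht x := by simpa using h.abs_flowOrbit_le hM ht x

end IsAnalyticFlow

/-- The constant in the bound for the `m`-th time derivative of an orbit of size `t ^ p`: every
derivative costs a factor `C / t`, applied at half the time. -/
noncomputable def smoothingConst (C p : ℝ) (m : ℕ) : ℝ :=
  ∏ i ∈ Finset.range m, C * 2 ^ (1 - (p - (i : ℝ)))

theorem smoothingConst_nonneg (hC : 0 ≤ C) (p : ℝ) (m : ℕ) : 0 ≤ smoothingConst C p m :=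
  Finset.prod_nonneg fun _ _ => by positivity

namespace IsFlowOrbit

variable {v : E → ℝ → ℝ} {B p t : ℝ}

theorem const_nonneg (hv : IsFlowOrbit P B p v) (x : E) : 0 ≤ B := by
  simpa using (abs_nonneg _).trans (hv.bound 1 one_pos x)

theorem tendsto_atTop (hv : IsFlowOrbit P B p v) (hp : p < 0) (x : E) :
    Tendsto (v x) atTop (𝓝 0) := by
  have hpow : Tendsto (fun t : ℝ => B * t ^ p) atTop (𝓝 (B * 0)) := by
    simpa only [neg_neg] using (tendsto_rpow_neg_atTop (neg_pos.2 hp)).const_mul B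
  rw [mul_zero] at hpow
  refine squeeze_zero_norm' ?_ hpow
  filter_upwards [eventually_gt_atTop 0] with t ht using hv.bound t ht x

theorem hasDerivAt_and_abs_deriv_le (h : IsAnalyticFlow P C) (hv : IsFlowOrbit P B p v)
    (ht : 0 < t) (x : E) : HasDerivAt (v x) (deriv (v x) t) t ∧
      |deriv (v x) t| ≤ C * 2 ^ (1 - p) * B * t ^ (p - 1) := by
  have ht2 : 0 < t / 2 := half_pos ht
  obtain ⟨hdiff, hle⟩ := h.deriv (fun y => v y (t / 2)) (B * (t / 2) ^ p) (hv.measurable _ ht2)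
    (hv.bound _ ht2) (t / 2) ht2 x
  have hshift : v x =ᶠ[𝓝 t] fun τ => flowOrbit P (fun y => v y (t / 2)) x (τ - t / 2) := by
    filter_upwards [lt_mem_nhds (half_lt_self ht)] with τ hτ
    rw [← hv.shift _ (sub_pos.2 hτ) _ ht2, sub_add_cancel]
  have hderiv : HasDerivAt (v x) (deriv (flowOrbit P (fun y => v y (t / 2)) x) (t / 2)) t := by
    refine HasDerivAt.congr_of_eventuallyEq (HasDerivAt.comp_sub_const t (t / 2) ?_) hshift
    rw [sub_half]
    exact hdiff.hasDerivAt
  rw [hderiv.deriv]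
  refine ⟨hderiv, hle.trans_eq ?_⟩
  rw [div_rpow ht.le zero_le_two, rpow_sub_one ht.ne', rpow_sub zero_lt_two, rpow_one]
  field_simp

theorem measurable_deriv (h : IsAnalyticFlow P C) (hv : IsFlowOrbit P B p v) (ht : 0 < t) :
    Measurable fun x => deriv (v x) t := by
  have hpos (n : ℕ) : 0 < 1 / ((n : ℝ) + 1) := Nat.one_div_pos_of_nat
  refine measurable_of_tendsto_metrizable
    (f := fun (n : ℕ) x => (1 / ((n : ℝ) + 1))⁻¹ • (v x (t + 1 / ((n : ℝ) + 1)) - v x t))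
    (fun n => ((hv.measurable _ (add_pos ht (hpos n))).sub (hv.measurable _ ht)).const_smul
      (1 / ((n : ℝ) + 1))⁻¹) ?_
  refine tendsto_pi_nhds.2 fun x => ?_
  have hslope := hasDerivAt_iff_tendsto_slope_zero.1 (hv.hasDerivAt_and_abs_deriv_le h ht x).1
  exact hslope.comp (tendsto_nhdsWithin_iff.2
    ⟨tendsto_one_div_add_atTop_nhds_zero_nat, Eventually.of_forall fun n => (hpos n).ne'⟩)

theorem deriv (h : IsAnalyticFlow P C) (hv : IsFlowOrbit P B p v) (hp : p ≤ 1) :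
    IsFlowOrbit P (C * 2 ^ (1 - p) * B) (p - 1) fun x => deriv (v x) where
  measurable t ht := hv.measurable_deriv h ht
  bound t ht x := (hv.hasDerivAt_and_abs_deriv_le h ht x).2
  shift s hs t ht x := by
    have := h.prob s hs x
    have ht2 : 0 < t / 2 := half_pos ht
    have hK : 0 ≤ C * 2 ^ (1 - p) * B :=
      mul_nonneg (mul_nonneg h.nonneg (by positivity)) (hv.const_nonneg x)
    have hunder := hasDerivAt_integral_of_dominated_loc_of_deriv_le (μ := P s x)
      (F := fun τ y => v y τ) (F' := fun τ y => _root_.deriv (v y) τ) (x₀ := t)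
      (s := Ioi (t / 2)) (bound := fun _ => C * 2 ^ (1 - p) * B * (t / 2) ^ (p - 1))
      (Ioi_mem_nhds (half_lt_self ht))
      (by filter_upwards [lt_mem_nhds ht] with τ hτ using
        (hv.measurable τ hτ).aestronglyMeasurable)
      (Integrable.of_bound (hv.measurable t ht).aestronglyMeasurable _
        (Eventually.of_forall (hv.bound t ht)))
      (hv.measurable_deriv h ht).aestronglyMeasurable
      (Eventually.of_forall fun y τ hτ =>
        (hv.hasDerivAt_and_abs_deriv_le h (ht2.trans hτ) y).2.trans (mul_le_mul_of_nonneg_left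
          (rpow_le_rpow_of_nonpos ht2 (le_of_lt hτ) (sub_nonpos.2 hp)) hK))
      (integrable_const _)
      (Eventually.of_forall fun y τ hτ => (hv.hasDerivAt_and_abs_deriv_le h (ht2.trans hτ) y).1)
    have hshift : (fun τ => v x (s + τ)) =ᶠ[𝓝 t] fun τ => ∫ y, v y τ ∂P s x := by
      filter_upwards [lt_mem_nhds ht] with τ hτ using hv.shift s hs τ hτ x
    have hd := (hv.hasDerivAt_and_abs_deriv_le h (add_pos hs ht) x).1
    exact (hd.comp_const_add s t).unique (hunder.2.congr_of_eventuallyEq hshift)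

theorem iteratedDeriv (h : IsAnalyticFlow P C) (hv : IsFlowOrbit P B p v) (hp : p ≤ 1) (m : ℕ) :
    IsFlowOrbit P (smoothingConst C p m * B) (p - m) fun x => iteratedDeriv m (v x) := by
  induction m with
  | zero => simpa [smoothingConst] using hv
  | succ m ih =>
    have hstep := ih.deriv h (by linarith [(m.cast_nonneg : (0 : ℝ) ≤ m)])
    simp only [iteratedDeriv_succ]
    convert hstep using 1
    · rw [smoothingConst, Finset.prod_range_succ, smoothingConst]
      ring
    · push_cast; ring

theorem isDerivTower (h : IsAnalyticFlow P C) (hv : IsFlowOrbit P B p v) (hp : p ≤ 1) (x : E) :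
    IsDerivTower fun i => _root_.iteratedDeriv i (v x) := fun i t ht => by
  simp only [iteratedDeriv_succ]
  exact ((hv.iteratedDeriv h hp i).hasDerivAt_and_abs_deriv_le h ht x).1

theorem of_ae {O : Set E} (h : IsAnalyticFlow P C)
    (hmeas : ∀ t > 0, Measurable fun x => v x t)
    (hshift : ∀ s > 0, ∀ t > 0, ∀ x, v x (s + t) = flowOrbit P (fun y => v y t) x s)
    (hO : ∀ t > 0, ∀ x, ∀ᵐ y ∂P t x, y ∈ O) (hB : ∀ t > 0, ∀ x ∈ O, |v x t| ≤ B * t ^ p) :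
    IsFlowOrbit P (B * 2 ^ (-p)) p v where
  measurable := hmeas
  shift := hshift
  bound t ht x := by
    have ht2 : 0 < t / 2 := half_pos ht
    have := h.prob _ ht2 x
    have hle := norm_integral_le_of_norm_le_const (μ := P (t / 2) x) (f := fun y => v y (t / 2))
      (C := B * (t / 2) ^ p) (by filter_upwards [hO _ ht2 x] with y hy using hB _ ht2 y hy)
    rw [probReal_univ, mul_one, ← flowOrbit, ← hshift _ ht2 _ ht2 x, add_halves,
      Real.norm_eq_abs] at hle
    refine hle.trans_eq ?_
    rw [div_rpow ht.le zero_le_two, rpow_neg zero_le_two]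
    ring

end IsFlowOrbit

/-- The Lipschitz space of order `β` of a flow, with the two halves of its norm kept apart:
`‖f‖_∞ ≤ M` and `‖∂_t^n P_t f‖_∞ ≤ A t ^ (β - n)`. -/
structure IsFlowLipschitz (P : ℝ → E → Measure E) (β : ℝ) (n : ℕ) (M A : ℝ) (f : E → ℝ) :
    Prop where
  measurable : Measurable f
  bound : ∀ x, |f x| ≤ M
  deriv_bound : ∀ t > 0, ∀ x, |iteratedDeriv n (flowOrbit P f x) t| ≤ A * t ^ (β - n)

/-- The flow `P_t` recovers `f` as its boundary value at `t = 0`, almost everywhere, whenever the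
boundary value exists. -/
def AttainsBoundaryValues (P : ℝ → E → Measure E) : Prop :=
  ∀ (f g : E → ℝ) (M : ℝ), Measurable f → (∀ z, |f z| ≤ M) →
    (∀ x, Tendsto (flowOrbit P f x) (𝓝[>] 0) (𝓝 (g x))) → ∀ t > 0, ∀ x, ∀ᵐ y ∂P t x, f y = g y

/-- The unnormalised fractional derivative `∫₀^∞ s^(-λ-1) (P_s - I)^k f ds` along a flow. -/
noncomputable def flowFracDeriv (P : ℝ → E → Measure E) (lam : ℝ) (k : ℕ) (f : E → ℝ) (x : E) : ℝ :=
  fracIntegral lam k (Function.update (flowOrbit P f x) 0 (f x)) 0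

/-- The constant in the interpolation of `t ^ (γ - m)` between the bounds for `∂_t^n P_t f` that
come from the boundedness and from the Lipschitz regularity of `f`. -/
noncomputable def interpolationConst (C γ : ℝ) (m n : ℕ) : ℝ :=
  descentConst γ m (n - m) * (smoothingConst C 0 n + 1)

theorem interpolationConst_nonneg {γ : ℝ} {m : ℕ} (hC : 0 ≤ C) (hγ : γ ≤ m) (n : ℕ) :
    0 ≤ interpolationConst C γ m n :=
  mul_nonneg (descentConst_nonneg hγ _) (add_nonneg (smoothingConst_nonneg hC _ _) zero_le_one)

namespace IsFlowLipschitz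

variable {f : E → ℝ} {M A β γ lam t : ℝ} {m n : ℕ}

theorem isFlowOrbit (h : IsAnalyticFlow P C) (hf : IsFlowLipschitz P β n M A f) :
    IsFlowOrbit P M 0 (flowOrbit P f) :=
  h.isFlowOrbit hf.measurable hf.bound

theorem isFlowOrbit_iteratedDeriv (h : IsAnalyticFlow P C) (hf : IsFlowLipschitz P β n M A f) :
    IsFlowOrbit P A (β - n) fun x => iteratedDeriv n (flowOrbit P f x) :=
  { (hf.isFlowOrbit h).iteratedDeriv h zero_le_one n with bound := hf.deriv_bound }

theorem isDerivTower (h : IsAnalyticFlow P C) (hf : IsFlowLipschitz P β n M A f) (x : E) :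
    IsDerivTower fun i => iteratedDeriv i (flowOrbit P f x) :=
  (hf.isFlowOrbit h).isDerivTower h zero_le_one x

theorem const_nonneg (hf : IsFlowLipschitz P β n M A f) (x : E) : 0 ≤ M ∧ 0 ≤ A :=
  ⟨(abs_nonneg _).trans (hf.bound x),
    by simpa using (abs_nonneg _).trans (hf.deriv_bound 1 one_pos x)⟩

theorem abs_iteratedDeriv_le (h : IsAnalyticFlow P C) (hf : IsFlowLipschitz P β n M A f)
    (hγ : 0 ≤ γ) (hγβ : γ ≤ β) (hγm : γ < m) (hmn : m ≤ n) (ht : 0 < t) (x : E) :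
    |iteratedDeriv m (flowOrbit P f x) t| ≤ interpolationConst C γ m n * (M + A) * t ^ (γ - m) := by
  obtain ⟨i, rfl⟩ := Nat.exists_eq_add_of_le hmn
  obtain ⟨hM, hA⟩ := hf.const_nonneg x
  have hK : 0 ≤ smoothingConst C 0 (m + i) := smoothingConst_nonneg h.nonneg _ _
  have horbit (j : ℕ) := (hf.isFlowOrbit h).iteratedDeriv h zero_le_one j
  have htop : ∀ τ > 0, ‖iteratedDeriv (m + i) (flowOrbit P f x) τ‖ ≤
      (smoothingConst C 0 (m + i) + 1) * (M + A) * τ ^ (γ - (m + i : ℕ)) := fun τ hτ => by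
    rcases le_total τ 1 with hτ1 | hτ1
    · refine (hf.deriv_bound τ hτ x).trans (mul_le_mul ?_ ?_ (by positivity) (by positivity))
      · nlinarith [mul_nonneg hK (add_nonneg hM hA)]
      · exact rpow_le_rpow_of_exponent_ge hτ hτ1 (by linarith)
    · refine ((horbit (m + i)).bound τ hτ x).trans
        (mul_le_mul ?_ ?_ (by positivity) (by positivity))
      · nlinarith [mul_nonneg hK hA]
      · exact rpow_le_rpow_of_exponent_le hτ1 (by linarith)
  have hdescent := (hf.isDerivTower h x).norm_le_descentConst_mul_rpow hγm (fun j hj => by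
    have hj0 : (0 : ℝ) < j := hγ.trans_lt (hγm.trans_le (by exact_mod_cast hj))
    exact (horbit j).tendsto_atTop (by linarith) x) i htop ht
  refine hdescent.trans_eq ?_
  rw [interpolationConst, Nat.add_sub_cancel_left]
  ring

theorem exists_tendsto_nhdsGT_zero (h : IsAnalyticFlow P C) (hf : IsFlowLipschitz P β n M A f)
    (hβ : 0 < β) (hn : 1 ≤ n) (x : E) : ∃ l, Tendsto (flowOrbit P f x) (𝓝[>] 0) (𝓝 l) := by
  have hγ : 0 < min β (1 / 2) := lt_min hβ one_half_pos
  refine exists_tendsto_nhdsGT_zero_of_norm_deriv_le_rpow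
    (B := interpolationConst C (min β (1 / 2)) 1 n * (M + A)) hγ
    (fun t ht => by simpa only [iteratedDeriv_zero] using hf.isDerivTower h x 0 t ht)
    fun t ht => ?_
  simpa using hf.abs_iteratedDeriv_le (m := 1) h hγ.le (min_le_left _ _)
    ((min_le_right _ _).trans_lt (by norm_num)) hn ht x

end IsFlowLipschitz

namespace IsAnalyticFlow

variable {f : E → ℝ} {M L lam s t : ℝ}

theorem measurable_fwdDiff_iter_update (h : IsAnalyticFlow P C) (hf : Measurable f) (k : ℕ) :
    Measurable fun p : E × ℝ =>
      (Δ_[p.2])^[k] (Function.update (flowOrbit P f p.1) 0 (f p.1)) 0 := by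
  simp_rw [fwdDiff_iter_eq_sum_shift, Function.update_apply, zsmul_eq_mul]
  refine Finset.measurable_sum _ fun i _ => Measurable.const_mul ?_ _
  have htime : Measurable fun p : E × ℝ => 0 + i • p.2 := by fun_prop
  exact Measurable.ite (htime (measurableSet_singleton 0)) (hf.comp measurable_fst)
    ((h.measurable f hf).comp (htime.prodMk measurable_fst))

theorem measurable_flowFracDeriv (h : IsAnalyticFlow P C) (hf : Measurable f) (k : ℕ) :
    Measurable (flowFracDeriv P lam k f) :=
  ((measurable_snd.pow_const _).smul
    (h.measurable_fwdDiff_iter_update hf k)).stronglyMeasurable.integral_prod_right'.measurable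

theorem integral_fwdDiff_iter_update (h : IsAnalyticFlow P C) (hf : Measurable f)
    (hM : ∀ z, |f z| ≤ M) (k : ℕ) (hs : 0 < s) (ht : 0 < t) (x : E) :
    ∫ y, (Δ_[s])^[k] (Function.update (flowOrbit P f y) 0 (f y)) 0 ∂P t x =
      (Δ_[s])^[k] (flowOrbit P f x) t := by
  have := h.prob t ht x
  have hterm (i : ℕ) :
      Integrable (fun y => Function.update (flowOrbit P f y) 0 (f y) (0 + i • s)) (P t x) ∧
      ∫ y, Function.update (flowOrbit P f y) 0 (f y) (0 + i • s) ∂P t x =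
        flowOrbit P f x (t + i • s) := by
    rcases Nat.eq_zero_or_pos i with rfl | hi
    · simp only [zero_smul, add_zero, Function.update_self]
      exact ⟨Integrable.of_bound hf.aestronglyMeasurable M (Eventually.of_forall hM), rfl⟩
    · have hpos : 0 < i • s := nsmul_pos hs hi.ne'
      simp only [zero_add, Function.update_of_ne hpos.ne']
      exact ⟨Integrable.of_bound ((h.isFlowOrbit hf hM).measurable _ hpos).aestronglyMeasurable M
        (Eventually.of_forall fun y => h.abs_flowOrbit_le hM hpos y),
        h.comp f M hf hM t ht _ hpos x⟩
  simp_rw [fwdDiff_iter_eq_sum_shift, zsmul_eq_mul]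
  rw [integral_finsetSum _ fun i _ => (hterm i).1.const_mul _]
  exact Finset.sum_congr rfl fun i _ => by rw [integral_const_mul, (hterm i).2]

theorem flowOrbit_flowFracDeriv (h : IsAnalyticFlow P C) (hf : Measurable f)
    (hM : ∀ z, |f z| ≤ M) (k : ℕ) (ht : 0 < t) (x : E)
    (hint : ∀ᵐ y ∂P t x,
      IntegrableOn (fun s => s ^ (-lam - 1) •
        (Δ_[s])^[k] (Function.update (flowOrbit P f y) 0 (f y)) 0) (Ioi 0) ∧
      ∫ s in Ioi 0, ‖s ^ (-lam - 1) •
        (Δ_[s])^[k] (Function.update (flowOrbit P f y) 0 (f y)) 0‖ ≤ L) :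
    flowOrbit P (flowFracDeriv P lam k f) x t = fracIntegral lam k (flowOrbit P f x) t := by
  have := h.prob t ht x
  have hmeas : AEStronglyMeasurable (fun p : E × ℝ => p.2 ^ (-lam - 1) •
      (Δ_[p.2])^[k] (Function.update (flowOrbit P f p.1) 0 (f p.1)) 0)
      ((P t x).prod (volume.restrict (Ioi 0))) :=
    ((measurable_snd.pow_const _).smul (h.measurable_fwdDiff_iter_update hf k)).aestronglyMeasurable
  have hprod := (integrable_prod_iff hmeas).2 ⟨hint.mono fun y hy => hy.1,
    Integrable.of_bound hmeas.norm.integral_prod_right' L <| hint.mono fun y hy => by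
      rw [norm_of_nonneg (integral_nonneg fun _ => norm_nonneg _)]
      exact hy.2⟩
  simp only [flowOrbit, flowFracDeriv, fracIntegral]
  rw [integral_integral_swap hprod]
  refine setIntegral_congr_fun measurableSet_Ioi fun s hs => ?_
  simp only [integral_smul]
  rw [← h.integral_fwdDiff_iter_update hf hM k hs ht x]

end IsAnalyticFlow

theorem IsDerivTower.extend {F : Type*} [NormedAddCommGroup F] [NormedSpace ℝ F] {G : ℕ → ℝ → F}
    (hG : IsDerivTower G) {l : F} (hl : Tendsto (G 0) (𝓝[>] 0) (𝓝 l)) :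
    IsDerivTower (Function.update G 0 (Function.update (G 0) 0 l)) ∧
      ContinuousOn (Function.update (G 0) 0 l) (Ici 0) := by
  refine ⟨fun i t ht => ?_, ?_⟩
  · rw [Function.update_of_ne i.succ_ne_zero]
    rcases eq_or_ne i 0 with rfl | hi
    · rw [Function.update_self]
      refine (hG 0 t ht).congr_of_eventuallyEq ?_
      filter_upwards [lt_mem_nhds ht] with τ hτ using Function.update_of_ne hτ.ne' _ _
    · rw [Function.update_of_ne hi]
      exact hG i t ht
  · rw [continuousOn_update_iff, Ici_sdiff_left]
    exact ⟨hG.continuousOn 0, fun _ => hl⟩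

/-- The constant in the sup bound for the fractional derivative of order `lam` in `(m, m + 1)` of a
function which is Lipschitz of order `γ`. -/
noncomputable def fracDerivConst (C lam γ : ℝ) (m n : ℕ) : ℝ :=
  interpolationConst C γ (m + 1) n / ((γ - m) * (γ - lam)) + 2 ^ (m + 1) / lam

namespace IsFlowLipschitz

variable {f : E → ℝ} {M A β γ lam t l : ℝ} {m n : ℕ}

theorem exists_extension (h : IsAnalyticFlow P C) (hf : IsFlowLipschitz P β n M A f) (hγ : 0 ≤ γ)
    (hγβ : γ ≤ β) (hγm : γ < m) (hm : 1 ≤ m) (hmn : m ≤ n) {x : E}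
    (hl : Tendsto (flowOrbit P f x) (𝓝[>] 0) (𝓝 l)) :
    ∃ G, IsDerivTower G ∧ G 0 = Function.update (flowOrbit P f x) 0 l ∧
      ContinuousOn (G 0) (Ici 0) ∧ (∀ τ ≥ 0, ‖G 0 τ‖ ≤ M) ∧
      ∀ τ > 0, ‖G m τ‖ ≤ interpolationConst C γ m n * (M + A) * τ ^ (γ - m) := by
  obtain ⟨htower, hcont⟩ := (hf.isDerivTower h x).extend (by simpa using hl)
  simp only [iteratedDeriv_zero] at htower hcont
  refine ⟨_, htower, Function.update_self .., by simpa using hcont, fun τ hτ => ?_, fun τ hτ => ?_⟩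
  · rw [Function.update_self]
    rcases hτ.eq_or_lt with rfl | hτ
    · rw [Function.update_self]
      refine le_of_tendsto hl.abs ?_
      filter_upwards [self_mem_nhdsWithin] with t ht using
        h.abs_flowOrbit_le hf.bound ht x
    · rw [Function.update_of_ne hτ.ne']
      exact h.abs_flowOrbit_le hf.bound hτ x
  · rw [Function.update_of_ne (by omega)]
    exact hf.abs_iteratedDeriv_le h hγ hγβ hγm hmn hτ x

theorem fracDerivConst_bound (hf : IsFlowLipschitz P β n M A f) (hlam : 0 < lam) (x : E) :
    interpolationConst C γ (m + 1) n * (M + A) / ((γ - m) * (γ - lam)) +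
      2 ^ (m + 1) * M / lam ≤ fracDerivConst C lam γ m n * (M + A) := by
  obtain ⟨_, hA⟩ := hf.const_nonneg x
  have hle : 2 ^ (m + 1) * M / lam ≤ 2 ^ (m + 1) * (M + A) / lam := by gcongr; linarith
  calc _ ≤ interpolationConst C γ (m + 1) n * (M + A) / ((γ - m) * (γ - lam)) +
        2 ^ (m + 1) * (M + A) / lam := by gcongr
    _ = _ := by rw [fracDerivConst]; ring

theorem integrableOn_fracIntegral_update_zero (h : IsAnalyticFlow P C)
    (hf : IsFlowLipschitz P β n M A f) (hlam : 0 < lam) (hlγ : lam < γ) (hmγ : m < γ) (hγβ : γ ≤ β)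
    (hγm : γ < m + 1) (hmn : m + 1 ≤ n) {x : E} (hl : Tendsto (flowOrbit P f x) (𝓝[>] 0) (𝓝 l)) :
    IntegrableOn (fun s => s ^ (-lam - 1) •
        (Δ_[s])^[m + 1] (Function.update (flowOrbit P f x) 0 l) 0) (Ioi 0) ∧
      ∫ s in Ioi 0, ‖s ^ (-lam - 1) •
        (Δ_[s])^[m + 1] (Function.update (flowOrbit P f x) 0 l) 0‖ ≤
          fracDerivConst C lam γ m n * (M + A) := by
  obtain ⟨hM, hA⟩ := hf.const_nonneg x
  obtain ⟨G, hG, hG0, hcont, hGM, hGB⟩ := hf.exists_extension (m := m + 1) h (by linarith) hγβ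
    (by exact_mod_cast hγm) (by omega) hmn hl
  have hK : 0 ≤ interpolationConst C γ (m + 1) n :=
    interpolationConst_nonneg h.nonneg (by exact_mod_cast hγm.le) n
  have hint := hG.integrableOn_fracIntegral_zero hcont hlam hlγ hmγ hγm.le (by positivity) hGB hGM
  rw [← hG0]
  exact ⟨hint.1, hint.2.trans (hf.fracDerivConst_bound hlam x)⟩

theorem abs_flowFracDeriv_le (h : IsAnalyticFlow P C)
    (hf : IsFlowLipschitz P β n M A f) (hlam : 0 < lam) (hlγ : lam < γ) (hmγ : m < γ) (hγβ : γ ≤ β)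
    (hγm : γ < m + 1) (hmn : m + 1 ≤ n) (x : E) :
    |flowFracDeriv P lam (m + 1) f x| ≤ fracDerivConst C lam γ m n * (M + A) := by
  obtain ⟨hM, hA⟩ := hf.const_nonneg x
  obtain ⟨l, hl⟩ := hf.exists_tendsto_nhdsGT_zero h (by linarith) (by omega) x
  obtain ⟨G, hG, hG0, hcont, hGM, hGB⟩ := hf.exists_extension (m := m + 1) h (by linarith) hγβ
    (by exact_mod_cast hγm) (by omega) hmn hl
  have hK : 0 ≤ interpolationConst C γ (m + 1) n :=
    interpolationConst_nonneg h.nonneg (by exact_mod_cast hγm.le) n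
  have hle := hG.norm_fracIntegral_update_zero_le hcont hlam hlγ hmγ hγm.le (by positivity) hGB
    hGM (f x)
  rw [hG0, Function.update_idem] at hle
  exact hle.trans (hf.fracDerivConst_bound hlam x)

theorem flowOrbit_flowFracDeriv (h : IsAnalyticFlow P C) (hP : AttainsBoundaryValues P)
    (hf : IsFlowLipschitz P β n M A f) (hlam : 0 < lam) (hlγ : lam < γ) (hmγ : m < γ) (hγβ : γ ≤ β)
    (hγm : γ < m + 1) (hmn : m + 1 ≤ n) (ht : 0 < t) (x : E) :
    flowOrbit P (flowFracDeriv P lam (m + 1) f) x t =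
      fracIntegral lam (m + 1) (flowOrbit P f x) t := by
  choose l hl using hf.exists_tendsto_nhdsGT_zero h (by linarith) (by omega)
  refine h.flowOrbit_flowFracDeriv (L := fracDerivConst C lam γ m n * (M + A))
    hf.measurable hf.bound (m + 1) ht x ?_
  filter_upwards [hP f l M hf.measurable hf.bound hl t ht x] with y hy
  rw [hy]
  exact hf.integrableOn_fracIntegral_update_zero h hlam hlγ hmγ hγβ hγm hmn (hl y)

theorem iteratedDeriv_fracIntegral (h : IsAnalyticFlow P C) (hf : IsFlowLipschitz P β n M A f)
    (hlam : 0 < lam) {k : ℕ} (hk : lam < k) (i : ℕ) (ht : 0 < t) (x : E) {g : ℝ → ℝ}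
    (hg : ∀ τ > 0, g τ = fracIntegral lam k (flowOrbit P f x) τ) :
    iteratedDeriv i g t = fracIntegral lam k (iteratedDeriv i (flowOrbit P f x)) t := by
  refine ((hf.isDerivTower h x).fracIntegral hlam hk fun j τ hτ => ?_).iteratedDeriv_eq
    (by simpa using hg) i ht
  have horbit := (hf.isFlowOrbit h).iteratedDeriv h zero_le_one j
  have hneg : (0 : ℝ) - j ≤ 0 := by simp
  exact ⟨smoothingConst C 0 j * M * τ ^ ((0 : ℝ) - j), fun σ hσ =>
    (horbit.bound σ (hτ.trans_le hσ) x).trans <|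
      mul_le_mul_of_nonneg_left (rpow_le_rpow_of_nonpos hτ hσ hneg) (horbit.const_nonneg x)⟩

theorem abs_fracIntegral_iteratedDeriv_le (h : IsAnalyticFlow P C)
    (hf : IsFlowLipschitz P β n M A f) (hlam : 0 < lam) {k : ℕ} (hk : lam < k) (hβn : β ≤ n)
    (ht : 0 < t) (x : E) :
    |fracIntegral lam k (iteratedDeriv n (flowOrbit P f x)) t| ≤
      (smoothingConst C (β - n) k / (k - lam) + 2 ^ k / lam) * A * t ^ (β - lam - n) := by
  have horbit := hf.isFlowOrbit_iteratedDeriv h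
  have hp : β - n ≤ 1 := by linarith
  have hA := (hf.const_nonneg x).2
  have hle := (horbit.isDerivTower h hp x).norm_fracIntegral_le_rpow hlam hk (sub_nonpos.2 hβn) hA
    (mul_nonneg (smoothingConst_nonneg h.nonneg _ k) hA)
    (fun τ hτ => by simpa using horbit.bound τ hτ x)
    (fun τ hτ => (horbit.iteratedDeriv h hp k).bound τ hτ x) ht
  rw [iteratedDeriv_zero, sub_right_comm] at hle
  exact hle.trans_eq (by ring)

end IsFlowLipschitz

theorem IsAnalyticFlow.exists_isFlowLipschitz_flowFracDeriv (h : IsAnalyticFlow P C)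
    (hP : AttainsBoundaryValues P) {lam β : ℝ} {m n : ℕ} (hlam : 0 < lam) (hlβ : lam < β)
    (hml : m ≤ lam) (hlm : lam < m + 1) (hβn : β ≤ n) (hmn : m + 1 ≤ n) :
    ∃ K ≥ 0, ∀ (f : E → ℝ) (M A : ℝ), IsFlowLipschitz P β n M A f →
      IsFlowLipschitz P (β - lam) n (K * (M + A)) (K * (M + A))
        (flowFracDeriv P lam (m + 1) f) := by
  obtain ⟨γ, hlγ, hγβ, hγm⟩ : ∃ γ, lam < γ ∧ γ ≤ β ∧ γ < m + 1 :=
    ⟨min β ((lam + (m + 1)) / 2), lt_min hlβ (by linarith), min_le_left _ _,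
      (min_le_right _ _).trans_lt (by linarith)⟩
  have hmγ : m < γ := hml.trans_lt hlγ
  have hk : lam < (m + 1 : ℕ) := by exact_mod_cast hlm
  set L₁ := fracDerivConst C lam γ m n
  set L₂ := smoothingConst C (β - n) (m + 1) / ((m + 1 : ℕ) - lam) + 2 ^ (m + 1) / lam
  have hL₁ : 0 ≤ L₁ := by
    have hγ : γ ≤ (m + 1 : ℕ) := by exact_mod_cast hγm.le
    exact add_nonneg (div_nonneg (interpolationConst_nonneg h.nonneg hγ n)
      (mul_pos (sub_pos.2 hmγ) (sub_pos.2 hlγ)).le) (by positivity)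
  have hL₂ : 0 ≤ L₂ := add_nonneg
    (div_nonneg (smoothingConst_nonneg h.nonneg _ _) (sub_pos.2 hk).le) (by positivity)
  refine ⟨L₁ + L₂, add_nonneg hL₁ hL₂, fun f M A hf =>
    ⟨h.measurable_flowFracDeriv hf.measurable _, fun x => ?_, fun t ht x => ?_⟩⟩
  all_goals obtain ⟨hM, hA⟩ := hf.const_nonneg x
  · refine (hf.abs_flowFracDeriv_le h hlam hlγ hmγ hγβ hγm hmn x).trans ?_
    gcongr
    exact le_add_of_nonneg_right hL₂
  · rw [hf.iteratedDeriv_fracIntegral h hlam hk n ht x fun τ hτ =>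
      hf.flowOrbit_flowFracDeriv h hP hlam hlγ hmγ hγβ hγm hmn hτ x]
    refine (hf.abs_fracIntegral_iteratedDeriv_le h hlam hk hβn ht x).trans ?_
    refine mul_le_mul_of_nonneg_right (mul_le_mul ?_ ?_ hA ?_) (rpow_nonneg ht.le _)
    exacts [le_add_of_nonneg_left hL₁, le_add_of_nonneg_left hM, add_nonneg hL₁ hL₂]

end Flow

/-! ### Uniqueness of Laplace transforms -/

section Laplace

theorem hasSum_charFun_map_exp_neg {μ : Measure ℝ} [IsFiniteMeasure μ] (hμ : ∀ᵐ y ∂μ, 0 ≤ y)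
    (t : ℝ) : HasSum (fun n : ℕ => ((t * Complex.I) ^ n / n.factorial : ℂ) *
      ((∫ y, exp (-(n * y)) ∂μ : ℝ) : ℂ)) (charFun (μ.map fun y => exp (-y)) t) := by
  have hchar : charFun (μ.map fun y => exp (-y)) t =
      ∫ y, Complex.exp (t * Complex.I * (exp (-y) : ℝ)) ∂μ := by
    rw [charFun_apply_real, integral_map (by fun_prop) (by fun_prop)]
    refine integral_congr_ae (ae_of_all _ fun y => ?_)
    simp only [mul_right_comm]
  have hterm : ∀ n : ℕ, ((t * Complex.I) ^ n / n.factorial : ℂ) *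
      ((∫ y, exp (-(n * y)) ∂μ : ℝ) : ℂ) =
      ∫ y, ((t * Complex.I * (exp (-y) : ℝ)) ^ n / n.factorial : ℂ) ∂μ := fun n => by
    rw [← integral_complex_ofReal, ← integral_const_mul]
    refine integral_congr_ae (ae_of_all _ fun y => ?_)
    simp only [← mul_neg, exp_nat_mul]
    push_cast
    ring
  simp_rw [hchar, hterm]
  refine hasSum_integral_of_dominated_convergence (fun n _ => |t| ^ n / n.factorial)
    (fun n => by fun_prop) (fun n => ?_) (ae_of_all _ fun _ => summable_pow_div_factorial |t|)
    (integrable_const _) (ae_of_all _ fun y => ?_)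
  · filter_upwards [hμ] with y hy
    have hexp : exp (-y) ≤ 1 := exp_le_one_iff.2 (by linarith)
    simp only [norm_div, norm_pow, norm_mul, Complex.norm_real, Complex.norm_I, mul_one,
      Complex.norm_natCast, Real.norm_eq_abs, abs_of_pos (exp_pos _)]
    gcongr
    exact mul_le_of_le_one_right (abs_nonneg t) hexp
  · rw [Complex.exp_eq_exp_ℂ]
    exact NormedSpace.expSeries_div_hasSum_exp _

theorem measure_ext_of_lintegral_exp_neg {μ ν : Measure ℝ} [IsFiniteMeasure μ] [IsFiniteMeasure ν]
    (hμ : ∀ᵐ y ∂μ, 0 ≤ y) (hν : ∀ᵐ y ∂ν, 0 ≤ y)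
    (h : ∀ n : ℕ, ∫⁻ y, ENNReal.ofReal (exp (-(n * y))) ∂μ =
      ∫⁻ y, ENNReal.ofReal (exp (-(n * y))) ∂ν) : μ = ν := by
  have hexp : MeasurableEmbedding fun y : ℝ => exp (-y) :=
    Measurable.measurableEmbedding (by fun_prop) fun a b hab => by
      simpa using exp_injective hab
  have hint : ∀ n : ℕ, ∫ y, exp (-(n * y)) ∂μ = ∫ y, exp (-(n * y)) ∂ν := fun n => by
    rw [integral_eq_lintegral_of_nonneg_ae (ae_of_all _ fun _ => (exp_pos _).le) (by fun_prop),
      integral_eq_lintegral_of_nonneg_ae (ae_of_all _ fun _ => (exp_pos _).le) (by fun_prop), h]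
  have hmap : μ.map (fun y => exp (-y)) = ν.map fun y => exp (-y) := by
    refine Measure.ext_of_charFun (funext fun t => ?_)
    refine (hasSum_charFun_map_exp_neg hμ t).unique ?_
    simpa only [hint] using hasSum_charFun_map_exp_neg hν t
  rw [← hexp.comap_map μ, hmap, hexp.comap_map]

theorem ae_eq_of_lintegral_exp_neg_mul_eq {f g : ℝ → ℝ≥0∞} (hf : Measurable f) (hg : Measurable g)
    (hf0 : ∀ y < 0, f y = 0) (hg0 : ∀ y < 0, g y = 0) (hgtop : ∫⁻ y, g y ≠ ∞)
    (h : ∀ n : ℕ, ∫⁻ y, ENNReal.ofReal (exp (-(n * y))) * f y =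
      ∫⁻ y, ENNReal.ofReal (exp (-(n * y))) * g y) : f =ᵐ[volume] g := by
  have hfg : ∫⁻ y, f y = ∫⁻ y, g y := by simpa using h 0
  have hftop : ∫⁻ y, f y ≠ ∞ := hfg ▸ hgtop
  have hsupp : ∀ u : ℝ → ℝ≥0∞, Measurable u → (∀ y < 0, u y = 0) →
      ∀ᵐ y ∂volume.withDensity u, 0 ≤ y := fun u hu hu0 => by
    rw [ae_withDensity_iff hu]
    exact ae_of_all _ fun y hy => not_lt.1 fun hlt => hy (hu0 y hlt)
  have := isFiniteMeasure_withDensity hftop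
  have := isFiniteMeasure_withDensity hgtop
  refine (withDensity_eq_iff hf.aemeasurable hg.aemeasurable hftop).1 ?_
  refine measure_ext_of_lintegral_exp_neg (hsupp f hf hf0) (hsupp g hg hg0) fun n => ?_
  rw [lintegral_withDensity_eq_lintegral_mul _ hf (by fun_prop),
    lintegral_withDensity_eq_lintegral_mul _ hg (by fun_prop)]
  simpa only [Pi.mul_apply, mul_comm (ENNReal.ofReal _)] using h n

end Laplace

/-! ### The one-dimensional Laguerre heat kernel -/

section HeatKernel

theorem measurable_gammaPDF (b r : ℝ) : Measurable (gammaPDF b r) := by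
  unfold gammaPDF
  fun_prop

theorem ofReal_exp_mul_gammaPDF {b r θ : ℝ} (hr : 0 < r) (hθ : 0 ≤ θ) (y : ℝ) :
    ENNReal.ofReal (exp (-(θ * y))) * gammaPDF b r y =
      ENNReal.ofReal ((r / (r + θ)) ^ b) * gammaPDF b (r + θ) y := by
  rcases lt_or_ge y 0 with hy | hy
  · simp [ProbabilityTheory.gammaPDF_of_neg hy]
  · rw [ProbabilityTheory.gammaPDF_of_nonneg hy, ProbabilityTheory.gammaPDF_of_nonneg hy,
      ← ENNReal.ofReal_mul (exp_pos _).le, ← ENNReal.ofReal_mul (by positivity)]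
    congr 1
    rw [div_rpow hr.le (by positivity)]
    have hexp : exp (-((r + θ) * y)) = exp (-(r * y)) * exp (-(θ * y)) := by
      rw [← exp_add]; ring_nf
    have hpow : (r + θ) ^ b ≠ 0 := (rpow_pos_of_pos (by positivity) _).ne'
    rw [hexp]
    field_simp

theorem lintegral_exp_mul_gammaPDF {b r θ : ℝ} (hb : 0 < b) (hr : 0 < r) (hθ : 0 ≤ θ) :
    ∫⁻ y, ENNReal.ofReal (exp (-(θ * y))) * gammaPDF b r y =
      ENNReal.ofReal ((r / (r + θ)) ^ b) := by
  simp_rw [ofReal_exp_mul_gammaPDF hr hθ]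
  rw [lintegral_const_mul _ (measurable_gammaPDF _ _),
    ProbabilityTheory.lintegral_gammaPDF_eq_one hb (by positivity), mul_one]

theorem tsum_poisson_mul_rpow {w q : ℝ} (hw : 0 ≤ w) (hq : 0 < q) (a : ℝ) :
    ∑' m : ℕ, ENNReal.ofReal (exp (-w) * w ^ m / m.factorial) * ENNReal.ofReal (q ^ (m + a)) =
      ENNReal.ofReal (q ^ a * exp (-(w * (1 - q)))) := by
  have hsum := (NormedSpace.expSeries_div_hasSum_exp (𝔸 := ℝ) (w * q)).mul_left (exp (-w) * q ^ a)
  have hterm : ∀ m : ℕ, ENNReal.ofReal (exp (-w) * w ^ m / m.factorial) *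
      ENNReal.ofReal (q ^ (m + a)) =
        ENNReal.ofReal (exp (-w) * q ^ a * ((w * q) ^ m / m.factorial)) := fun m => by
    rw [← ENNReal.ofReal_mul (by positivity), rpow_add hq, rpow_natCast, mul_pow]
    ring_nf
  simp_rw [hterm]
  rw [← ENNReal.ofReal_tsum_of_nonneg (fun m => by positivity) hsum.summable, hsum.tsum_eq,
    ← Real.exp_eq_exp_ℝ, mul_right_comm, ← exp_add, mul_comm]
  ring_nf

/-- The density in `y` of the Laguerre heat kernel on `(0,∞)` at time `s`, started at `|x|`, with
`a = α + 1`. It is written as a Poisson mixture of gamma densities, which vanishes for `y < 0`. -/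
@[irreducible] noncomputable def heatDensity (a s x y : ℝ) : ℝ≥0∞ :=
  ∑' m : ℕ, ENNReal.ofReal (exp (-(exp (-s) * |x| / (1 - exp (-s)))) *
    (exp (-s) * |x| / (1 - exp (-s))) ^ m / m.factorial) *
      gammaPDF (m + a) (1 / (1 - exp (-s))) y

theorem measurable_heatDensity (a : ℝ) :
    Measurable fun p : ℝ × ℝ × ℝ => heatDensity a p.1 p.2.1 p.2.2 := by
  unfold heatDensity ProbabilityTheory.gammaPDF ProbabilityTheory.gammaPDFReal
  refine Measurable.tsum fun m => ?_
  refine Measurable.mul (by fun_prop) (Measurable.ennreal_ofReal ?_)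
  exact Measurable.ite (measurableSet_le measurable_const (by fun_prop)) (by fun_prop)
    measurable_const

@[fun_prop]
theorem measurable_heatDensity_comp {Ω : Type*} [MeasurableSpace Ω] {a : ℝ} {s x y : Ω → ℝ}
    (hs : Measurable s) (hx : Measurable x) (hy : Measurable y) :
    Measurable fun ω => heatDensity a (s ω) (x ω) (y ω) :=
  (measurable_heatDensity a).comp (hs.prodMk (hx.prodMk hy))

theorem heatDensity_of_neg {a s x y : ℝ} (hy : y < 0) : heatDensity a s x y = 0 := by
  simp [heatDensity, ProbabilityTheory.gammaPDF_of_neg hy]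

theorem one_sub_exp_neg_pos {s : ℝ} (hs : 0 < s) : 0 < 1 - exp (-s) := by
  rw [sub_pos]; simpa using hs

theorem lintegral_exp_mul_heatDensity {a s θ : ℝ} (ha : 0 < a) (hs : 0 < s) (hθ : 0 ≤ θ) (x : ℝ) :
    ∫⁻ y, ENNReal.ofReal (exp (-(θ * y))) * heatDensity a s x y =
      ENNReal.ofReal ((1 + θ * (1 - exp (-s))) ^ (-a) *
        exp (-(θ * exp (-s) / (1 + θ * (1 - exp (-s))) * |x|))) := by
  have hc := one_sub_exp_neg_pos hs
  unfold heatDensity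
  set c := 1 - exp (-s)
  have hrate : 1 / c / (1 / c + θ) = (1 + θ * c)⁻¹ := by field_simp
  simp_rw [← ENNReal.tsum_mul_left, mul_left_comm (ENNReal.ofReal (exp (-(θ * _))))]
  rw [lintegral_tsum fun m => by unfold gammaPDF; fun_prop]
  have hterm : ∀ m : ℕ, ∫⁻ y, ENNReal.ofReal (exp (-(exp (-s) * |x| / c)) *
      (exp (-s) * |x| / c) ^ m / m.factorial) *
        (ENNReal.ofReal (exp (-(θ * y))) * gammaPDF (m + a) (1 / c) y) =
      ENNReal.ofReal (exp (-(exp (-s) * |x| / c)) * (exp (-s) * |x| / c) ^ m / m.factorial) *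
        ENNReal.ofReal ((1 + θ * c)⁻¹ ^ (m + a)) := fun m => by
    rw [lintegral_const_mul _ (by unfold gammaPDF; fun_prop),
      lintegral_exp_mul_gammaPDF (by positivity) (by positivity) hθ, hrate]
  simp_rw [hterm]
  rw [tsum_poisson_mul_rpow (by positivity) (by positivity), inv_rpow (by positivity),
    ← rpow_neg (by positivity)]
  congr 4
  field_simp
  ring

theorem lintegral_heatDensity {a s : ℝ} (ha : 0 < a) (hs : 0 < s) (x : ℝ) :
    ∫⁻ y, heatDensity a s x y = 1 := by
  simpa using lintegral_exp_mul_heatDensity ha hs le_rfl x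

theorem lintegral_exp_mul_lintegral_heatDensity {a t θ : ℝ} (ha : 0 < a) (ht : 0 < t)
    (hθ : 0 ≤ θ) (s x : ℝ) :
    ∫⁻ z, ENNReal.ofReal (exp (-(θ * z))) * ∫⁻ y, heatDensity a s x y * heatDensity a t y z =
      ENNReal.ofReal ((1 + θ * (1 - exp (-t))) ^ (-a)) * ∫⁻ y, ENNReal.ofReal
        (exp (-(θ * exp (-t) / (1 + θ * (1 - exp (-t))) * y))) * heatDensity a s x y := by
  have hc := one_sub_exp_neg_pos ht
  calc _ = ∫⁻ z, ∫⁻ y, heatDensity a s x y *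
        (ENNReal.ofReal (exp (-(θ * z))) * heatDensity a t y z) := by
        refine lintegral_congr fun z => ?_
        rw [← lintegral_const_mul _ (by fun_prop)]
        exact lintegral_congr fun y => mul_left_comm _ _ _
    _ = ∫⁻ y, ∫⁻ z, heatDensity a s x y *
        (ENNReal.ofReal (exp (-(θ * z))) * heatDensity a t y z) :=
        lintegral_lintegral_swap (by fun_prop)
    _ = _ := by
        rw [← lintegral_const_mul _ (by fun_prop)]
        refine lintegral_congr fun y => ?_
        rw [lintegral_const_mul _ (by fun_prop), lintegral_exp_mul_heatDensity ha ht hθ]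
        rcases lt_or_ge y 0 with hy | hy
        · simp [heatDensity_of_neg hy]
        · rw [abs_of_nonneg hy, ENNReal.ofReal_mul (by positivity), mul_comm, mul_assoc]

theorem lintegral_heatDensity_comp {a s t : ℝ} (ha : 0 < a) (hs : 0 < s) (ht : 0 < t) (x : ℝ) :
    ∀ᵐ z, ∫⁻ y, heatDensity a s x y * heatDensity a t y z = heatDensity a (s + t) x z := by
  refine ae_eq_of_lintegral_exp_neg_mul_eq
    (Measurable.lintegral_prod_left'
      (f := fun p : ℝ × ℝ => heatDensity a s x p.1 * heatDensity a t p.1 p.2) (by fun_prop))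
    (by fun_prop) (fun z hz => by simp [heatDensity_of_neg hz]) (fun z hz => heatDensity_of_neg hz)
    (by simp [lintegral_heatDensity ha (add_pos hs ht)]) fun n => ?_
  have hcs := one_sub_exp_neg_pos hs
  have hct := one_sub_exp_neg_pos ht
  have hq : (0 : ℝ) < 1 + n * (1 - exp (-t)) := by positivity
  set φ : ℝ := n * exp (-t) / (1 + n * (1 - exp (-t))) with hφ
  have hfactor : (1 + n * (1 - exp (-t))) * (1 + φ * (1 - exp (-s))) =
      1 + n * (1 - exp (-(s + t))) := by
    rw [hφ, neg_add, exp_add]; field_simp; ring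
  have hslope : φ * exp (-s) / (1 + φ * (1 - exp (-s))) =
      n * exp (-(s + t)) / (1 + n * (1 - exp (-(s + t)))) := by
    rw [← hfactor, ← div_div, neg_add, exp_add, hφ]
    ring
  rw [lintegral_exp_mul_lintegral_heatDensity ha ht n.cast_nonneg,
    lintegral_exp_mul_heatDensity ha hs (by positivity),
    lintegral_exp_mul_heatDensity ha (add_pos hs ht) n.cast_nonneg,
    ← ENNReal.ofReal_mul (by positivity), ← mul_assoc, ← mul_rpow hq.le (by positivity), hfactor,
    hslope]

theorem heatDensity_eq {a s x y : ℝ} (ha : 0 < a) (hs : 0 < s) (hx : 0 < x) (hy : 0 < y) :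
    heatDensity a s x y = ENNReal.ofReal (exp (-((exp (-s) * x + y) / (1 - exp (-s)))) *
      (y ^ (a - 1) * (1 - exp (-s)) ^ (-a))) * ∑' m : ℕ, ENNReal.ofReal
        ((exp (-s) * x * y / (1 - exp (-s)) ^ 2) ^ m / (m.factorial * Gamma (m + a))) := by
  have hc := one_sub_exp_neg_pos hs
  unfold heatDensity
  set c := 1 - exp (-s)
  rw [abs_of_pos hx, ← ENNReal.tsum_mul_left]
  refine tsum_congr fun m => ?_
  have : 0 < Gamma (m + a) := Gamma_pos_of_pos (by positivity)
  rw [ProbabilityTheory.gammaPDF_of_nonneg hy.le, ← ENNReal.ofReal_mul (by positivity),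
    ← ENNReal.ofReal_mul (by positivity)]
  congr 1
  have hexp : exp (-((exp (-s) * x + y) / c)) =
      exp (-(exp (-s) * x / c)) * exp (-(1 / c * y)) := by
    rw [← exp_add]; ring_nf
  have hpow : y ^ (m + a - 1) = y ^ m * y ^ (a - 1) := by
    rw [add_sub_assoc, rpow_add hy, rpow_natCast]
  have hrate : (1 / c) ^ (m + a) = (c ^ m)⁻¹ * c ^ (-a) := by
    rw [one_div, rpow_add (by positivity), rpow_natCast, inv_rpow hc.le, rpow_neg hc.le, inv_pow]
  rw [hexp, hpow, hrate]
  simp only [div_pow, mul_pow, pow_right_comm c 2 m]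
  field_simp

theorem heatDensity_symm {a s x y : ℝ} (ha : 0 < a) (hs : 0 < s) (hx : 0 < x) (hy : 0 < y) :
    gammaPDF a 1 x * heatDensity a s x y = gammaPDF a 1 y * heatDensity a s y x := by
  have hc := one_sub_exp_neg_pos hs
  have : 0 < Gamma a := Gamma_pos_of_pos ha
  have hexp : exp (-(1 * x)) * exp (-((exp (-s) * x + y) / (1 - exp (-s)))) =
      exp (-(1 * y)) * exp (-((exp (-s) * y + x) / (1 - exp (-s)))) := by
    rw [← exp_add, ← exp_add]
    congr 1
    field_simp
    ring
  rw [heatDensity_eq ha hs hx hy, heatDensity_eq ha hs hy hx, mul_right_comm _ y x,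
    ProbabilityTheory.gammaPDF_of_nonneg hx.le, ProbabilityTheory.gammaPDF_of_nonneg hy.le,
    ← mul_assoc (ENNReal.ofReal (_ * exp (-(1 * x)))),
    ← mul_assoc (ENNReal.ofReal (_ * exp (-(1 * y)))), ← ENNReal.ofReal_mul (by positivity),
    ← ENNReal.ofReal_mul (by positivity)]
  congr 2
  linear_combination (1 ^ a / Gamma a * x ^ (a - 1) * y ^ (a - 1) * (1 - exp (-s)) ^ (-a)) * hexp

theorem besselI_two_mul_sqrt_div {u c : ℝ} (hu : 0 < u) (hc : 0 < c) (ν : ℝ) :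
    besselI ν (2 * √u / c) =
      u ^ (ν / 2) / c ^ ν * ∑' m : ℕ, (u / c ^ 2) ^ m / (m.factorial * Gamma (m + (ν + 1))) := by
  rw [besselI, ← tsum_mul_left]
  refine tsum_congr fun m => ?_
  have hsqrt : √u ^ ν = u ^ (ν / 2) := by
    rw [sqrt_eq_rpow, ← rpow_mul hu.le, one_div_mul_eq_div]
  have hpow : (√u / c) ^ (2 * (m : ℝ) + ν) = (u / c ^ 2) ^ m * (u ^ (ν / 2) / c ^ ν) := by
    rw [rpow_add (by positivity), rpow_mul (by positivity), rpow_two, rpow_natCast, div_pow,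
      sq_sqrt hu.le, div_rpow (by positivity) hc.le, hsqrt]
  rw [show 2 * √u / c / 2 = √u / c by ring, hpow, add_assoc]
  ring

theorem toReal_heatDensity {α s x y : ℝ} (hα : -1 < α) (hs : 0 < s) (hx : 0 < x) (hy : 0 < y) :
    (heatDensity (α + 1) s x y).toReal = (1 - exp (-s))⁻¹ * ((y / x) ^ (α / 2) *
      exp (-((exp (-s) * x + y) / (1 - exp (-s))) - α * log (exp (-s)) / 2) *
        besselI α (2 * √(exp (-s) * x * y) / (1 - exp (-s)))) := by
  have hc := one_sub_exp_neg_pos hs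
  have ha : 0 < α + 1 := by linarith
  have hG : ∀ m : ℕ, 0 < Gamma (m + (α + 1)) := fun m => Gamma_pos_of_pos (by positivity)
  rw [heatDensity_eq ha hs hx hy, besselI_two_mul_sqrt_div (by positivity) hc, ENNReal.toReal_mul,
    ENNReal.toReal_ofReal (by positivity), ENNReal.tsum_toReal_eq fun _ => ENNReal.ofReal_ne_top]
  have hterm (m : ℕ) : 0 ≤ (exp (-s) * x * y / (1 - exp (-s)) ^ 2) ^ m /
      (m.factorial * Gamma (m + (α + 1))) := by
    have := hG m
    positivity
  simp_rw [fun m => ENNReal.toReal_ofReal (hterm m)]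
  set c := 1 - exp (-s)
  have hexp : exp (-((exp (-s) * x + y) / c) - α * log (exp (-s)) / 2) =
      exp (-((exp (-s) * x + y) / c)) * (exp (-s) ^ (α / 2))⁻¹ := by
    rw [log_exp, ← exp_mul, ← exp_neg, ← exp_add]; ring_nf
  have hy2 : y ^ (α + 1 - 1) = y ^ (α / 2) * y ^ (α / 2) := by rw [← rpow_add hy]; ring_nf
  have hcpow : c ^ (-(α + 1)) = (c ^ α)⁻¹ * c⁻¹ := by
    rw [neg_add, rpow_add hc, rpow_neg hc.le, rpow_neg_one]
  have hx2 : x ^ (α / 2) ≠ 0 := by positivity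
  have he2 : exp (-s) ^ (α / 2) ≠ 0 := by positivity
  rw [hexp, hy2, hcpow, div_rpow hy.le hx.le, mul_rpow (by positivity) hy.le,
    mul_rpow (by positivity) hx.le]
  field_simp

end HeatKernel

/-! ### The one-sided stable law of index `1/2` -/

section Stable

theorem lintegral_Ioi_deriv_mul_comp_sub_div {a b : ℝ} (ha : 0 < a) (hb : 0 < b) (G : ℝ → ℝ≥0∞) :
    ∫⁻ v in Ioi 0, ENNReal.ofReal (a + b / v ^ 2) * G (a * v - b / v) = ∫⁻ w, G w := by
  have hderiv : ∀ v ∈ Ioi (0 : ℝ), HasDerivWithinAt (fun v => a * v - b / v) (a + b / v ^ 2)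
      (Ioi 0) v := fun v hv => by
    have h : HasDerivAt (fun v : ℝ => a * v - b * v⁻¹) (a * 1 - b * -(v ^ 2)⁻¹) v :=
      ((hasDerivAt_id v).const_mul a).sub ((hasDerivAt_inv (ne_of_gt hv)).const_mul b)
    simp only [div_eq_mul_inv]
    exact (h.congr_deriv (by ring)).hasDerivWithinAt
  have hmono : StrictMonoOn (fun v => a * v - b / v) (Ioi 0) := fun v hv w _ hvw =>
    sub_lt_sub (mul_lt_mul_of_pos_left hvw ha) (div_lt_div_of_pos_left hb hv hvw)
  have himage : (fun v => a * v - b / v) '' Ioi 0 = univ := by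
    refine eq_univ_of_forall fun w => ?_
    have hlt : |w| < √(w ^ 2 + 4 * a * b) := by
      rw [← sqrt_sq_eq_abs]
      exact sqrt_lt_sqrt (sq_nonneg w) (by nlinarith [mul_pos ha hb])
    have hsq := sq_sqrt (show 0 ≤ w ^ 2 + 4 * a * b by positivity)
    set u := √(w ^ 2 + 4 * a * b)
    have hpos : 0 < w + u := by linarith [neg_abs_le w]
    refine ⟨(w + u) / (2 * a), mem_Ioi.2 (by positivity), ?_⟩
    field_simp
    linear_combination hsq
  have h := lintegral_image_eq_lintegral_abs_deriv_mul measurableSet_Ioi hderiv hmono.injOn G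
  rw [himage, Measure.restrict_univ] at h
  rw [h]
  refine setLIntegral_congr_fun measurableSet_Ioi fun v _ => ?_
  rw [abs_of_pos (by positivity)]

theorem lintegral_Ioi_comp_div {k : ℝ} (hk : 0 < k) (G : ℝ → ℝ≥0∞) :
    ∫⁻ v in Ioi 0, ENNReal.ofReal (k / v ^ 2) * G (k / v) = ∫⁻ v in Ioi 0, G v := by
  have hderiv : ∀ v ∈ Ioi (0 : ℝ), HasDerivWithinAt (fun v => k / v) (-(k / v ^ 2)) (Ioi 0) v :=
    fun v hv => by
      have h := (hasDerivAt_inv (ne_of_gt hv)).const_mul k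
      simp only [div_eq_mul_inv _ (_ : ℝ)] at h ⊢
      exact (h.congr_deriv (by ring)).hasDerivWithinAt
  have hinj : InjOn (fun v => k / v) (Ioi 0) := fun v _ w _ hvw => by
    simpa [div_eq_mul_inv, hk.ne'] using hvw
  have himage : (fun v => k / v) '' Ioi 0 = Ioi 0 := by
    refine Subset.antisymm (image_subset_iff.2 fun v hv => div_pos hk hv) fun w hw => ?_
    exact ⟨k / w, div_pos hk hw, div_div_cancel₀ hk.ne'⟩
  conv_rhs =>
    rw [← himage, lintegral_image_eq_lintegral_abs_deriv_mul measurableSet_Ioi hderiv hinj]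
  refine setLIntegral_congr_fun measurableSet_Ioi fun v _ => ?_
  rw [abs_neg, abs_of_nonneg (by positivity)]

-- The Cauchy–Schlömilch substitution: `v ↦ b / (a v)` exchanges the two terms of the Jacobian
-- `a + b / v²` of `v ↦ a v - b / v`, so each of them contributes half of the integral.
theorem two_mul_lintegral_Ioi_comp_sub_div {a b : ℝ} (ha : 0 < a) (hb : 0 < b) {G : ℝ → ℝ≥0∞}
    (hG : Measurable G) (heven : ∀ w, G (-w) = G w) :
    2 * (ENNReal.ofReal a * ∫⁻ v in Ioi 0, G (a * v - b / v)) = ∫⁻ w, G w := by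
  have hswap : ENNReal.ofReal a * ∫⁻ v in Ioi 0, G (a * v - b / v) =
      ∫⁻ v in Ioi 0, ENNReal.ofReal (b / v ^ 2) * G (a * v - b / v) := by
    rw [← lintegral_Ioi_comp_div (div_pos hb ha), ← lintegral_const_mul _ (by fun_prop)]
    refine setLIntegral_congr_fun measurableSet_Ioi fun v hv => ?_
    have hv' : v ≠ 0 := ne_of_gt hv
    rw [← mul_assoc, ← ENNReal.ofReal_mul ha.le, ← heven]
    congr 2 <;> field_simp
    ring
  rw [two_mul]
  nth_rewrite 2 [hswap]
  rw [← lintegral_const_mul _ (by fun_prop), ← lintegral_add_left (by fun_prop),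
    ← lintegral_Ioi_deriv_mul_comp_sub_div ha hb]
  refine setLIntegral_congr_fun measurableSet_Ioi fun v _ => ?_
  rw [← add_mul, ← ENNReal.ofReal_add ha.le (by positivity)]

/-- The density of `1 / √(4 s)` when `s` follows the one-sided `1/2`-stable law at time `t`. -/
noncomputable def stableDensity (t v : ℝ) : ℝ := 2 / √π * (t * exp (-(t * v) ^ 2))

@[fun_prop]
theorem measurable_stableDensity {X : Type*} [MeasurableSpace X] {f g : X → ℝ}
    (hf : Measurable f) (hg : Measurable g) : Measurable fun x => stableDensity (f x) (g x) := by
  unfold stableDensity; fun_prop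

theorem stableDensity_pos {t : ℝ} (ht : 0 < t) (v : ℝ) : 0 < stableDensity t v := by
  unfold stableDensity; positivity

theorem stableDensity_eq_mul_exp_neg_mul_sq (t v : ℝ) :
    stableDensity t v = 2 / √π * t * exp (-(t ^ 2) * v ^ 2) := by
  rw [stableDensity, mul_pow, neg_mul, mul_assoc]

theorem integrable_stableDensity {t : ℝ} (ht : 0 < t) : Integrable (stableDensity t) := by
  simp_rw [funext (stableDensity_eq_mul_exp_neg_mul_sq t)]
  exact (integrable_exp_neg_mul_sq (by positivity)).const_mul _

theorem integral_Ioi_stableDensity {t : ℝ} (ht : 0 < t) : ∫ v in Ioi 0, stableDensity t v = 1 := by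
  simp_rw [stableDensity_eq_mul_exp_neg_mul_sq]
  rw [integral_const_mul, integral_gaussian_Ioi, sqrt_div pi_pos.le, sqrt_sq ht.le]
  field_simp

theorem stableDensity_mul_exp {t θ v : ℝ} (hθ : 0 ≤ θ) (hv : v ≠ 0) :
    stableDensity t v * exp (-(θ * (1 / (4 * v ^ 2)))) =
      2 / √π * exp (-(t * √θ)) * (t * exp (-(t * v - √θ / 2 / v) ^ 2)) := by
  have hexp : exp (-(t * v) ^ 2) * exp (-(θ * (1 / (4 * v ^ 2)))) =
      exp (-(t * √θ)) * exp (-(t * v - √θ / 2 / v) ^ 2) := by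
    rw [← exp_add, ← exp_add]
    congr 1
    field_simp
    linear_combination 4 * sq_sqrt hθ
  unfold stableDensity
  linear_combination 2 / √π * t * hexp

theorem lintegral_stableDensity_mul_exp {t θ : ℝ} (ht : 0 < t) (hθ : 0 ≤ θ) :
    ∫⁻ v in Ioi 0, ENNReal.ofReal (stableDensity t v) *
      ENNReal.ofReal (exp (-(θ * (1 / (4 * v ^ 2))))) = ENNReal.ofReal (exp (-(t * √θ))) := by
  rcases eq_or_lt_of_le hθ with rfl | hθpos
  · have h := ofReal_integral_eq_lintegral_ofReal (integrable_stableDensity ht).integrableOn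
      (ae_of_all (volume.restrict (Ioi 0)) fun v => (stableDensity_pos ht v).le)
    simpa [integral_Ioi_stableDensity ht] using h.symm
  have hgauss : ∫⁻ w : ℝ, ENNReal.ofReal (exp (-w ^ 2)) = ENNReal.ofReal √π := by
    rw [← ofReal_integral_eq_lintegral_ofReal (by simpa using integrable_exp_neg_mul_sq one_pos)
      (ae_of_all _ fun w => (exp_pos _).le)]
    congr 1
    simpa using integral_gaussian 1
  have hsub := two_mul_lintegral_Ioi_comp_sub_div ht (show 0 < √θ / 2 by positivity)
    (G := fun w => ENNReal.ofReal (exp (-w ^ 2))) (by fun_prop) (by simp)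
  have hterm : ∀ v ∈ Ioi (0 : ℝ), ENNReal.ofReal (stableDensity t v) *
      ENNReal.ofReal (exp (-(θ * (1 / (4 * v ^ 2))))) =
      ENNReal.ofReal (exp (-(t * √θ)) / √π) * 2 *
        (ENNReal.ofReal t * ENNReal.ofReal (exp (-(t * v - √θ / 2 / v) ^ 2))) := fun v hv => by
    rw [← ENNReal.ofReal_mul (stableDensity_pos ht v).le, stableDensity_mul_exp hθ (ne_of_gt hv),
      ← ENNReal.ofReal_ofNat 2, ← ENNReal.ofReal_mul (by positivity), ← ENNReal.ofReal_mul ht.le,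
      ← ENNReal.ofReal_mul (by positivity)]
    ring_nf
  rw [setLIntegral_congr_fun measurableSet_Ioi hterm, lintegral_const_mul _ (by fun_prop),
    lintegral_const_mul _ (by fun_prop), mul_assoc, hsub, hgauss,
    ← ENNReal.ofReal_mul (by positivity), div_mul_cancel₀ _ (by positivity)]

/-- The one-sided `1/2`-stable law at time `t`, with Laplace transform `exp (-t √θ)`. -/
noncomputable def stableMeasure (t : ℝ) : Measure ℝ :=
  ((volume.restrict (Ioi 0)).withDensity fun v => ENNReal.ofReal (stableDensity t v)).map
    fun v => 1 / (4 * v ^ 2)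

theorem lintegral_stableMeasure (t : ℝ) {F : ℝ → ℝ≥0∞} (hF : Measurable F) :
    ∫⁻ s, F s ∂stableMeasure t =
      ∫⁻ v in Ioi 0, ENNReal.ofReal (stableDensity t v) * F (1 / (4 * v ^ 2)) := by
  rw [stableMeasure, lintegral_map hF (by fun_prop),
    lintegral_withDensity_eq_lintegral_mul _ (by fun_prop) (by fun_prop)]
  rfl

theorem lintegral_exp_stableMeasure {t θ : ℝ} (ht : 0 < t) (hθ : 0 ≤ θ) :
    ∫⁻ s, ENNReal.ofReal (exp (-(θ * s))) ∂stableMeasure t = ENNReal.ofReal (exp (-(t * √θ))) := by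
  rw [lintegral_stableMeasure t (by fun_prop), lintegral_stableDensity_mul_exp ht hθ]

theorem isProbabilityMeasure_stableMeasure {t : ℝ} (ht : 0 < t) :
    IsProbabilityMeasure (stableMeasure t) :=
  ⟨by simpa using lintegral_exp_stableMeasure ht le_rfl⟩

theorem ae_stableMeasure_pos (t : ℝ) : ∀ᵐ s ∂stableMeasure t, 0 < s := by
  rw [stableMeasure, ae_map_iff (by fun_prop) measurableSet_Ioi]
  refine (withDensity_absolutelyContinuous _ _).ae_le ?_
  filter_upwards [ae_restrict_mem measurableSet_Ioi] with v hv
  have : (0 : ℝ) < v := hv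
  positivity

theorem stableMeasure_conv {s t : ℝ} (hs : 0 < s) (ht : 0 < t) :
    (stableMeasure s).conv (stableMeasure t) = stableMeasure (s + t) := by
  have := isProbabilityMeasure_stableMeasure hs
  have := isProbabilityMeasure_stableMeasure ht
  have := isProbabilityMeasure_stableMeasure (add_pos hs ht)
  refine measure_ext_of_lintegral_exp_neg ?_ ?_ fun n => ?_
  · rw [Measure.conv, ae_map_iff (by fun_prop) measurableSet_Ici]
    filter_upwards [Measure.quasiMeasurePreserving_fst.ae (ae_stableMeasure_pos s),
      Measure.quasiMeasurePreserving_snd.ae (ae_stableMeasure_pos t)] with p hp₁ hp₂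
    exact (add_pos hp₁ hp₂).le
  · exact (ae_stableMeasure_pos (s + t)).mono fun _ => le_of_lt
  · have hexp : ∀ x y : ℝ, ENNReal.ofReal (exp (-(n * (x + y)))) =
        ENNReal.ofReal (exp (-(n * x))) * ENNReal.ofReal (exp (-(n * y))) := fun x y => by
      rw [← ENNReal.ofReal_mul (exp_pos _).le, ← exp_add]; ring_nf
    have hmeas : Measurable fun y : ℝ => ENNReal.ofReal (exp (-(n * y))) := by fun_prop
    rw [Measure.lintegral_conv hmeas, lintegral_exp_stableMeasure (add_pos hs ht) n.cast_nonneg]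
    simp_rw [hexp, lintegral_const_mul _ hmeas, lintegral_exp_stableMeasure ht n.cast_nonneg]
    rw [lintegral_mul_const _ hmeas, lintegral_exp_stableMeasure hs n.cast_nonneg,
      ← ENNReal.ofReal_mul (exp_pos _).le, ← exp_add]
    ring_nf

end Stable

/-! ### Subordination -/

section Subordination

variable {E : Type*} [MeasurableSpace E] {H K : Kernel (ℝ × E) E} {f : E → ℝ} {M t : ℝ}

/-- The transition kernels `K (t, x)`, `t > 0`, of a time-homogeneous Markov process. Nothing is
required of `K (t, x)` for `t ≤ 0`. -/
structure IsMarkovSemigroup (K : Kernel (ℝ × E) E) : Prop where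
  markov : ∀ t > 0, IsMarkovKernel (K.sectR t)
  comp : ∀ s > 0, ∀ t > 0, K.sectR t ∘ₖ K.sectR s = K.sectR (s + t)

theorem IsMarkovSemigroup.isProbabilityMeasure (h : IsMarkovSemigroup K) (ht : 0 < t) (x : E) :
    IsProbabilityMeasure (K (t, x)) := by
  have := h.markov t ht
  rw [← Kernel.sectR_apply]
  infer_instance

theorem IsMarkovSemigroup.abs_flowOrbit_le (h : IsMarkovSemigroup K) (hM : ∀ z, |f z| ≤ M)
    (ht : 0 < t) (x : E) : |flowOrbit (fun t x => K (t, x)) f x t| ≤ M := by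
  have := h.isProbabilityMeasure ht x
  simpa [flowOrbit] using norm_integral_le_of_norm_le_const (μ := K (t, x)) (f := f)
    (ae_of_all _ hM)

theorem IsMarkovSemigroup.flowOrbit_comp (h : IsMarkovSemigroup K) {s : ℝ} (hf : Measurable f)
    (hM : ∀ z, |f z| ≤ M) (hs : 0 < s) (ht : 0 < t) (x : E) :
    flowOrbit (fun t x => K (t, x)) (fun y => flowOrbit (fun t x => K (t, x)) f y t) x s =
      flowOrbit (fun t x => K (t, x)) f x (s + t) := by
  have hcomp := h.comp s hs t ht
  have := h.markov _ (add_pos hs ht)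
  have hint : Integrable f ((K.sectR t ∘ₖ K.sectR s) x) := by
    rw [hcomp]
    exact Integrable.of_bound hf.aestronglyMeasurable M (ae_of_all _ hM)
  simpa [hcomp, flowOrbit] using (Kernel.integral_comp hint).symm

theorem sFinite_stableMeasure (t : ℝ) : SFinite (stableMeasure t) := by
  unfold stableMeasure; infer_instance

/-- The semigroup obtained from `H` by running it at the independent random time `stableMeasure t`.
In terms of generators, `H` is generated by `-L` and its subordination by `-√L`. -/
noncomputable def subordinate (H : Kernel (ℝ × E) E) : Kernel (ℝ × E) E where
  toFun p := (stableMeasure p.1).bind (H.sectL p.2)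
  measurable' := by
    refine Measure.measurable_of_measurable_coe _ fun A hA => ?_
    have hbind : ∀ p : ℝ × E, (stableMeasure p.1).bind (H.sectL p.2) A = ∫⁻ v in Ioi 0,
        ENNReal.ofReal (stableDensity p.1 v) * H (1 / (4 * v ^ 2), p.2) A := fun p => by
      rw [Measure.bind_apply hA (Kernel.aemeasurable _)]
      exact lintegral_stableMeasure p.1 ((H.sectL p.2).measurable_coe hA)
    simp_rw [hbind]
    exact Measurable.lintegral_prod_right' (ν := volume.restrict (Ioi 0))
      (f := fun q : (ℝ × E) × ℝ => ENNReal.ofReal (stableDensity q.1.1 q.2) *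
        H (1 / (4 * q.2 ^ 2), q.1.2) A)
      ((by fun_prop : Measurable fun q : (ℝ × E) × ℝ =>
        ENNReal.ofReal (stableDensity q.1.1 q.2)).mul
        ((H.measurable_coe hA).comp (by fun_prop)))

theorem subordinate_apply (H : Kernel (ℝ × E) E) (t : ℝ) (x : E) :
    subordinate H (t, x) = (stableMeasure t).bind (H.sectL x) := rfl

theorem subordinate_apply' (H : Kernel (ℝ × E) E) (t : ℝ) (x : E) {A : Set E}
    (hA : MeasurableSet A) : subordinate H (t, x) A = ∫⁻ s, H (s, x) A ∂stableMeasure t := by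
  simp [subordinate_apply, Measure.bind_apply hA (Kernel.aemeasurable _)]

theorem lintegral_subordinate (H : Kernel (ℝ × E) E) (t : ℝ) (x : E) {F : E → ℝ≥0∞}
    (hF : Measurable F) :
    ∫⁻ z, F z ∂subordinate H (t, x) = ∫⁻ s, ∫⁻ z, F z ∂H (s, x) ∂stableMeasure t := by
  rw [subordinate_apply, Measure.lintegral_bind (Kernel.aemeasurable _) hF.aemeasurable]
  rfl

theorem subordinate_absolutelyContinuous {ν : Measure E} {x : E}
    (h : ∀ s > 0, H (s, x) ≪ ν) (t : ℝ) : subordinate H (t, x) ≪ ν := by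
  refine Measure.AbsolutelyContinuous.mk fun A hA hA0 => ?_
  rw [subordinate_apply' _ _ _ hA, lintegral_congr_ae (g := 0), Pi.zero_def, lintegral_zero]
  filter_upwards [ae_stableMeasure_pos t] with s hs using h s hs hA0

theorem isReversible_subordinate {γ : Measure E} [SFinite γ]
    (h : ∀ s > 0, (H.sectR s).IsReversible γ) (t : ℝ) :
    ((subordinate H).sectR t).IsReversible γ := by
  have := sFinite_stableMeasure t
  have hswap : ∀ {A B}, MeasurableSet B → ∫⁻ x in A, (subordinate H).sectR t x B ∂γ =
      ∫⁻ s, ∫⁻ x in A, H.sectR s x B ∂γ ∂stableMeasure t := fun {A B} hB => by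
    simp_rw [Kernel.sectR_apply, subordinate_apply' _ _ _ hB]
    exact lintegral_lintegral_swap (((H.measurable_coe hB).comp measurable_swap).aemeasurable)
  intro A B hA hB
  rw [hswap hB, hswap hA]
  refine lintegral_congr_ae ?_
  filter_upwards [ae_stableMeasure_pos t] with s hs using h s hs hA hB

theorem IsMarkovSemigroup.subordinate (h : IsMarkovSemigroup H) :
    IsMarkovSemigroup (subordinate H) where
  markov t ht := by
    have := isProbabilityMeasure_stableMeasure ht
    refine ⟨fun x => ⟨?_⟩⟩
    rw [Kernel.sectR_apply, subordinate_apply' _ _ _ MeasurableSet.univ,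
      lintegral_congr_ae (g := 1), Pi.one_def, lintegral_one, measure_univ]
    filter_upwards [ae_stableMeasure_pos t] with s hs
    have := h.isProbabilityMeasure hs x
    exact measure_univ
  comp s hs t ht := by
    have := sFinite_stableMeasure s
    have := sFinite_stableMeasure t
    ext x A hA
    have hHA := H.measurable_coe hA
    rw [Kernel.comp_apply' _ _ _ hA]
    simp only [Kernel.sectR_apply]
    rw [lintegral_subordinate (F := fun y => _root_.subordinate H (t, y) A) H s x
      (((_root_.subordinate H).measurable_coe hA).comp measurable_prodMk_left),
      subordinate_apply' _ _ _ hA, ← stableMeasure_conv hs ht,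
      Measure.lintegral_conv (f := fun σ => H (σ, x) A) (hHA.comp measurable_prodMk_right)]
    refine lintegral_congr_ae ?_
    filter_upwards [ae_stableMeasure_pos s] with σ hσ
    have := h.isProbabilityMeasure hσ x
    simp_rw [subordinate_apply' _ _ _ hA]
    rw [lintegral_lintegral_swap (f := fun z τ => H (τ, z) A)
      (hHA.comp measurable_swap).aemeasurable]
    refine lintegral_congr_ae ?_
    filter_upwards [ae_stableMeasure_pos t] with τ hτ
    simpa only [Kernel.comp_apply' _ _ _ hA, Kernel.sectR_apply] using
      congrArg (fun κ : Kernel E E => κ x A) (h.comp σ hσ τ hτ)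

theorem integral_stableMeasure (ht : 0 < t) {g : ℝ → ℝ} (hg : Measurable g) :
    ∫ s, g s ∂stableMeasure t = ∫ v in Ioi 0, stableDensity t v * g (1 / (4 * v ^ 2)) := by
  rw [stableMeasure, integral_map (by fun_prop) hg.aestronglyMeasurable,
    integral_withDensity_eq_integral_toReal_smul (by fun_prop) (ae_of_all _ fun _ => by simp)]
  simp [ENNReal.toReal_ofReal (stableDensity_pos ht _).le]

theorem measurable_flowOrbit (hf : Measurable f) :
    Measurable fun p : ℝ × E => flowOrbit (fun t x => K (t, x)) f p.2 p.1 :=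
  (StronglyMeasurable.integral_kernel (κ := K) hf.stronglyMeasurable).measurable

theorem flowOrbit_subordinate (h : IsMarkovSemigroup H) (hf : Measurable f)
    (hM : ∀ z, |f z| ≤ M) (ht : 0 < t) (x : E) :
    flowOrbit (fun t x => subordinate H (t, x)) f x t = ∫ v in Ioi 0,
      stableDensity t v * flowOrbit (fun t x => H (t, x)) f x (1 / (4 * v ^ 2)) := by
  have := h.subordinate.isProbabilityMeasure ht x
  have hint : Integrable f ((H.sectL x ∘ₖ Kernel.const Unit (stableMeasure t)) ()) := by
    rw [← Measure.comp_eq_comp_const_apply, ← subordinate_apply]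
    exact Integrable.of_bound hf.aestronglyMeasurable M (ae_of_all _ hM)
  rw [flowOrbit, subordinate_apply, Measure.comp_eq_comp_const_apply, Kernel.integral_comp hint,
    Kernel.const_apply]
  exact integral_stableMeasure ht ((measurable_flowOrbit hf).comp measurable_prodMk_right)

theorem hasDerivAt_stableDensity (t v : ℝ) : HasDerivAt (fun τ => stableDensity τ v)
    (2 / √π * ((1 - 2 * (t * v) ^ 2) * exp (-(t * v) ^ 2))) t := by
  unfold stableDensity
  have hsq : HasDerivAt (fun τ : ℝ => -(τ * v) ^ 2) (-(2 * (t * v) * v)) t :=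
    ((((hasDerivAt_id t).mul_const v).pow 2).neg).congr_deriv (by simp)
  refine (((hasDerivAt_id t).mul hsq.exp).const_mul (2 / √π)).congr_deriv ?_
  simp only [id]
  ring

theorem abs_deriv_stableDensity_le {τ v : ℝ} (ht : 0 ≤ t) (hτ : t ≤ τ) :
    |2 / √π * ((1 - 2 * (τ * v) ^ 2) * exp (-(τ * v) ^ 2))| ≤
      8 / √π * exp (-(t ^ 2 / 2) * v ^ 2) := by
  set w := (τ * v) ^ 2 with hw
  have hpoly : |1 - 2 * w| ≤ 4 * exp (w / 2) := by
    have := add_one_le_exp (w / 2)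
    have : 0 ≤ w := sq_nonneg _
    rw [abs_le]; constructor <;> linarith
  have hexp : exp (-(w / 2)) ≤ exp (-(t ^ 2 / 2) * v ^ 2) := by
    rw [exp_le_exp, hw, mul_pow]
    have : t ^ 2 * v ^ 2 ≤ τ ^ 2 * v ^ 2 := by gcongr
    linarith
  rw [abs_mul, abs_mul, abs_of_pos (exp_pos _), abs_of_pos (by positivity)]
  calc 2 / √π * (|1 - 2 * w| * exp (-w)) ≤ 2 / √π * (4 * exp (w / 2) * exp (-w)) := by gcongr
    _ = 8 / √π * exp (-(w / 2)) := by
        rw [mul_assoc 4, ← exp_add]; ring_nf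
    _ ≤ _ := by gcongr

theorem integral_Ioi_exp_neg_sq_div_two_mul_sq_le (ht : 0 < t) :
    ∫ v in Ioi 0, exp (-(t ^ 2 / 2) * v ^ 2) ≤ √π / t := by
  have hsqrt : √(π / (t ^ 2 / 2)) ≤ 2 * (√π / t) := by
    rw [sqrt_le_iff]
    refine ⟨by positivity, ?_⟩
    rw [mul_pow, div_pow, sq_sqrt pi_pos.le]
    have : 0 ≤ π / t ^ 2 := by positivity
    calc π / (t ^ 2 / 2) = 2 * (π / t ^ 2) := by field_simp
      _ ≤ _ := by linarith
  rw [integral_gaussian_Ioi]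
  linarith

theorem hasDerivAt_integral_stableDensity_mul {g : ℝ → ℝ} (hg : Measurable g)
    (hM : ∀ v ∈ Ioi (0 : ℝ), |g v| ≤ M) (ht : 0 < t) :
    HasDerivAt (fun τ => ∫ v in Ioi 0, stableDensity τ v * g v) (∫ v in Ioi 0,
      2 / √π * ((1 - 2 * (t * v) ^ 2) * exp (-(t * v) ^ 2)) * g v) t := by
  have hae : ∀ᵐ v ∂volume.restrict (Ioi (0 : ℝ)), |g v| ≤ M :=
    (ae_restrict_mem measurableSet_Ioi).mono hM
  refine (hasDerivAt_integral_of_dominated_loc_of_deriv_le (μ := volume.restrict (Ioi 0))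
    (F := fun τ v => stableDensity τ v * g v)
    (bound := fun v => 8 / √π * exp (-((t / 2) ^ 2 / 2) * v ^ 2) * M)
    (Ioi_mem_nhds (half_lt_self ht)) (Eventually.of_forall fun τ => by fun_prop)
    ((integrable_stableDensity ht).integrableOn.mul_bdd (by fun_prop) hae) (by fun_prop) ?_
    (((integrable_exp_neg_mul_sq (by positivity)).const_mul _).mul_const _).integrableOn
    (ae_of_all _ fun v τ _ => (hasDerivAt_stableDensity τ v).mul_const _)).2
  filter_upwards [hae] with v hv τ hτ
  rw [norm_mul]
  exact mul_le_mul (abs_deriv_stableDensity_le (by positivity) (le_of_lt hτ)) hv (norm_nonneg _)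
    (by positivity)

theorem abs_deriv_integral_stableDensity_mul_le {g : ℝ → ℝ} (hg : Measurable g)
    (hM : ∀ v ∈ Ioi (0 : ℝ), |g v| ≤ M) (ht : 0 < t) :
    |deriv (fun τ => ∫ v in Ioi 0, stableDensity τ v * g v) t| ≤ 8 * M / t := by
  have hM0 : 0 ≤ M := (abs_nonneg _).trans (hM 1 (by simp))
  rw [(hasDerivAt_integral_stableDensity_mul hg hM ht).deriv]
  refine (norm_integral_le_of_norm_le (G := ℝ)
    (g := fun v => 8 / √π * exp (-(t ^ 2 / 2) * v ^ 2) * M)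
    (((integrable_exp_neg_mul_sq (by positivity)).const_mul _).mul_const _).integrableOn
    ?_).trans ?_
  · filter_upwards [ae_restrict_mem measurableSet_Ioi] with v hv
    rw [norm_mul]
    exact mul_le_mul (abs_deriv_stableDensity_le ht.le le_rfl) (hM v hv) (norm_nonneg _)
      (by positivity)
  · rw [integral_mul_const, integral_const_mul]
    calc _ ≤ 8 / √π * (√π / t) * M := by
          gcongr
          exact integral_Ioi_exp_neg_sq_div_two_mul_sq_le ht
      _ = 8 * M / t := by field_simp

-- The derivative falls on the law of the random time, so nothing is asked of `H` itself.
theorem IsMarkovSemigroup.isAnalyticFlow_subordinate (h : IsMarkovSemigroup H) :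
    IsAnalyticFlow (fun t x => _root_.subordinate H (t, x)) 8 where
  prob _ ht x := h.subordinate.isProbabilityMeasure ht x
  measurable _ hf := measurable_flowOrbit hf
  comp _ _ hf hM _ hs _ ht x := h.subordinate.flowOrbit_comp hf hM hs ht x
  nonneg := by norm_num
  deriv f M hf hM t ht x := by
    have hflow : Measurable fun v : ℝ => flowOrbit (fun t x => H (t, x)) f x (1 / (4 * v ^ 2)) :=
      (measurable_flowOrbit hf).comp (f := fun v : ℝ => (1 / (4 * v ^ 2), x)) (by fun_prop)
    have hbound : ∀ v ∈ Ioi (0 : ℝ), |flowOrbit (fun t x => H (t, x)) f x (1 / (4 * v ^ 2))| ≤ M :=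
      fun v (hv : 0 < v) => h.abs_flowOrbit_le hM (by positivity) x
    have heq : flowOrbit (fun t x => _root_.subordinate H (t, x)) f x =ᶠ[𝓝 t] fun τ =>
        ∫ v in Ioi 0, stableDensity τ v *
          flowOrbit (fun t x => H (t, x)) f x (1 / (4 * v ^ 2)) := by
      filter_upwards [Ioi_mem_nhds ht] with τ hτ using flowOrbit_subordinate h hf hM hτ x
    rw [heq.deriv_eq]
    have hdiff := (hasDerivAt_integral_stableDensity_mul hflow hbound ht).differentiableAt
    exact ⟨hdiff.congr_of_eventuallyEq heq,
      abs_deriv_integral_stableDensity_mul_le hflow hbound ht⟩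

end Subordination

/-! ### The Laguerre heat kernel -/

theorem lintegral_fin_nat_prod_eq_prod : ∀ {n : ℕ} {X : Fin n → Type*}
    [∀ i, MeasurableSpace (X i)] (μ : ∀ i, Measure (X i)) [∀ i, SigmaFinite (μ i)]
    {f : ∀ i, X i → ℝ≥0∞}, (∀ i, Measurable (f i)) →
    ∫⁻ y, ∏ i, f i (y i) ∂Measure.pi μ = ∏ i, ∫⁻ y, f i y ∂μ i
  | 0, _, _, μ, _, f, _ => by simp [Measure.pi_of_empty μ]
  | n + 1, X, _, μ, _, f, hf => by
    calc _ = ∫⁻ p : X 0 × ∀ i : Fin n, X i.succ, f 0 p.1 * ∏ i : Fin n, f i.succ (p.2 i)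
          ∂(μ 0).prod (Measure.pi fun i => μ i.succ) :=
          ((measurePreserving_piFinSuccAbove μ 0).symm.lintegral_comp (by fun_prop)).symm.trans
            (lintegral_congr fun p => Fin.prod_univ_succ _)
      _ = (∫⁻ y, f 0 y ∂μ 0) * ∏ i : Fin n, ∫⁻ y, f i.succ y ∂μ i.succ := by
          rw [← lintegral_fin_nat_prod_eq_prod _ fun i => hf i.succ]
          exact lintegral_prod_mul (ν := Measure.pi fun i : Fin n => μ i.succ) (f := f 0)
            (g := fun z => ∏ i, f i.succ (z i)) (hf 0).aemeasurable
            (Finset.measurable_prod _ fun i _ =>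
              (hf i.succ).comp (measurable_pi_apply i)).aemeasurable
      _ = _ := (Fin.prod_univ_succ fun i => ∫⁻ y, f i y ∂μ i).symm

section LaguerreHeat

variable {d : ℕ} {a : Fin d → ℝ} {s t : ℝ} {x y : Fin d → ℝ}

/-- The product of the one-dimensional densities `heatDensity (a j)`. -/
@[irreducible] noncomputable def heatProd (a : Fin d → ℝ) (s : ℝ) (x y : Fin d → ℝ) : ℝ≥0∞ :=
  ∏ j, heatDensity (a j) s (x j) (y j)

@[fun_prop]
theorem measurable_heatProd {Ω : Type*} [MeasurableSpace Ω] {s : Ω → ℝ} {x y : Ω → Fin d → ℝ}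
    (hs : Measurable s) (hx : Measurable x) (hy : Measurable y) :
    Measurable fun ω => heatProd a (s ω) (x ω) (y ω) := by
  unfold heatProd
  exact Finset.measurable_prod _ fun j _ => measurable_heatDensity_comp hs
    ((measurable_pi_apply j).comp hx) ((measurable_pi_apply j).comp hy)

theorem ae_lintegral_heatProd_mul_heatProd (ha : ∀ j, 0 < a j) (hs : 0 < s) (ht : 0 < t)
    (x : Fin d → ℝ) :
    ∀ᵐ z, ∫⁻ y, heatProd a s x y * heatProd a t y z = heatProd a (s + t) x z := by
  have hcoord : ∀ j, ∀ᵐ z : Fin d → ℝ,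
      ∫⁻ y, heatDensity (a j) s (x j) y * heatDensity (a j) t y (z j) =
        heatDensity (a j) (s + t) (x j) (z j) := fun j =>
    (Measure.tendsto_eval_ae_ae (μ := fun _ : Fin d => (volume : Measure ℝ)) (i := j)).eventually
      (lintegral_heatDensity_comp (ha j) hs ht (x j))
  filter_upwards [ae_all_iff.2 hcoord] with z hz
  unfold heatProd
  simp_rw [← Finset.prod_mul_distrib]
  rw [volume_pi, lintegral_fin_nat_prod_eq_prod _
    (f := fun j y => heatDensity (a j) s (x j) y * heatDensity (a j) t y (z j))
    fun j => by fun_prop]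
  exact Finset.prod_congr rfl fun j _ => hz j

/-- The heat kernel `exp (-s L_α) (x, dy)` of the Laguerre operator, with `a = α + 1`. -/
noncomputable def laguerreHeat (a : Fin d → ℝ) : Kernel (ℝ × (Fin d → ℝ)) (Fin d → ℝ) :=
  (Kernel.const _ volume).withDensity fun p => heatProd a p.1 p.2

theorem laguerreHeat_apply (a : Fin d → ℝ) (s : ℝ) (x : Fin d → ℝ) :
    laguerreHeat a (s, x) = volume.withDensity (heatProd a s x) := by
  rw [laguerreHeat, Kernel.withDensity_apply _ (by fun_prop), Kernel.const_apply]

theorem laguerreHeat_apply' (a : Fin d → ℝ) (s : ℝ) (x : Fin d → ℝ) {A : Set (Fin d → ℝ)}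
    (hA : MeasurableSet A) : laguerreHeat a (s, x) A = ∫⁻ y in A, heatProd a s x y := by
  rw [laguerreHeat_apply, withDensity_apply _ hA]

theorem lintegral_laguerreHeat (a : Fin d → ℝ) (s : ℝ) (x : Fin d → ℝ) {F : (Fin d → ℝ) → ℝ≥0∞}
    (hF : Measurable F) : ∫⁻ y, F y ∂laguerreHeat a (s, x) = ∫⁻ y, heatProd a s x y * F y := by
  rw [laguerreHeat_apply, lintegral_withDensity_eq_lintegral_mul _ (by fun_prop) hF]
  rfl

theorem lintegral_comp_eval_laguerreHeat (ha : ∀ j, 0 < a j) (hs : 0 < s) (x : Fin d → ℝ)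
    {F : ℝ → ℝ≥0∞} (hF : Measurable F) (j : Fin d) :
    ∫⁻ y, F (y j) ∂laguerreHeat a (s, x) = ∫⁻ y, F y * heatDensity (a j) s (x j) y := by
  have hprod : ∀ y : Fin d → ℝ, heatProd a s x y * F (y j) =
      ∏ i, (if i = j then F (y i) else 1) * heatDensity (a i) s (x i) (y i) := fun y => by
    rw [Finset.prod_mul_distrib, heatProd, mul_comm]
    simp
  rw [lintegral_laguerreHeat a s x (F := fun y => F (y j)) (by fun_prop)]
  simp_rw [hprod]
  rw [volume_pi, lintegral_fin_nat_prod_eq_prod _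
    (f := fun i y => (if i = j then F y else 1) * heatDensity (a i) s (x i) y)
    (fun i => by split_ifs <;> fun_prop), Finset.prod_eq_single_of_mem j (Finset.mem_univ j)]
  · simp
  · intro i _ hi
    simp [hi, lintegral_heatDensity (ha i) hs]

theorem isMarkovSemigroup_laguerreHeat (ha : ∀ j, 0 < a j) :
    IsMarkovSemigroup (laguerreHeat a) where
  markov s hs := ⟨fun x => ⟨by
    rw [Kernel.sectR_apply, laguerreHeat_apply' _ _ _ MeasurableSet.univ, Measure.restrict_univ]
    unfold heatProd
    rw [volume_pi, lintegral_fin_nat_prod_eq_prod _ (f := fun j => heatDensity (a j) s (x j))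
      fun j => by fun_prop]
    simp [lintegral_heatDensity (ha _) hs]⟩⟩
  comp s hs t ht := by
    ext x A hA
    rw [Kernel.comp_apply' _ _ _ hA]
    simp only [Kernel.sectR_apply, laguerreHeat_apply' _ _ _ hA]
    rw [lintegral_laguerreHeat a s x (Measurable.lintegral_prod_right'
      (f := fun p : (Fin d → ℝ) × (Fin d → ℝ) => heatProd a t p.1 p.2) (by fun_prop))]
    simp_rw [fun y => (lintegral_const_mul (μ := volume.restrict A) (heatProd a s x y)
      (by fun_prop : Measurable (heatProd a t y))).symm]
    rw [lintegral_lintegral_swap (by fun_prop)]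
    exact lintegral_congr_ae (ae_restrict_of_ae (ae_lintegral_heatProd_mul_heatProd ha hs ht x))

/-- The density of the product of the gamma laws, a probability measure with respect to which the
Laguerre semigroups are symmetric. -/
@[irreducible] noncomputable def gammaProd (a x : Fin d → ℝ) : ℝ≥0∞ :=
  ∏ j, gammaPDF (a j) 1 (x j)

@[fun_prop]
theorem measurable_gammaProd (a : Fin d → ℝ) : Measurable (gammaProd a) := by
  unfold gammaProd gammaPDF
  fun_prop

theorem isFiniteMeasure_withDensity_gammaProd (ha : ∀ j, 0 < a j) :
    IsFiniteMeasure (volume.withDensity (gammaProd a)) := by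
  refine isFiniteMeasure_withDensity ?_
  unfold gammaProd
  rw [volume_pi, lintegral_fin_nat_prod_eq_prod _ fun j => measurable_gammaPDF (a j) 1]
  simp [ProbabilityTheory.lintegral_gammaPDF_eq_one (ha _) one_pos]

theorem gammaProd_ne_zero (ha : ∀ j, 0 < a j) (hx : x ∈ posOrthant d) : gammaProd a x ≠ 0 := by
  unfold gammaProd
  refine Finset.prod_ne_zero_iff.2 fun j _ => ?_
  have hxj : 0 < x j := hx j (mem_univ j)
  have := Gamma_pos_of_pos (ha j)
  rw [ProbabilityTheory.gammaPDF_of_nonneg hxj.le, Ne, ENNReal.ofReal_eq_zero, not_le]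
  positivity

theorem ae_forall_ne_zero : ∀ᵐ y : Fin d → ℝ, ∀ j, y j ≠ 0 :=
  ae_all_iff.2 fun j => (Measure.tendsto_eval_ae_ae
    (μ := fun _ : Fin d => (volume : Measure ℝ)) (i := j)).eventually (Measure.ae_ne volume 0)

theorem ae_withDensity_prod_mem_posOrthant {p : Fin d → ℝ → ℝ≥0∞}
    (hm : Measurable fun y : Fin d → ℝ => ∏ j, p j (y j)) (hp : ∀ j, ∀ r < 0, p j r = 0) :
    ∀ᵐ y ∂volume.withDensity fun y : Fin d → ℝ => ∏ j, p j (y j), y ∈ posOrthant d := by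
  rw [ae_withDensity_iff hm]
  filter_upwards [ae_forall_ne_zero] with y hy hne j _
  refine lt_of_le_of_ne (not_lt.1 fun hj => hne ?_) (hy j).symm
  exact Finset.prod_eq_zero (Finset.mem_univ j) (hp j _ hj)

theorem ae_withDensity_gammaProd_mem_posOrthant (a : Fin d → ℝ) :
    ∀ᵐ y ∂volume.withDensity (gammaProd a), y ∈ posOrthant d := by
  have hm := measurable_gammaProd a
  unfold gammaProd at hm ⊢
  exact ae_withDensity_prod_mem_posOrthant hm fun j _ => ProbabilityTheory.gammaPDF_of_neg

theorem laguerreHeat_absolutelyContinuous (ha : ∀ j, 0 < a j) (s : ℝ) (x : Fin d → ℝ) :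
    laguerreHeat a (s, x) ≪ volume.withDensity (gammaProd a) := by
  have hO : ∀ᵐ y ∂laguerreHeat a (s, x), y ∈ posOrthant d := by
    have hm : Measurable (heatProd a s x) := by fun_prop
    rw [laguerreHeat_apply]
    unfold heatProd at hm ⊢
    exact ae_withDensity_prod_mem_posOrthant hm fun j _ => heatDensity_of_neg
  refine Measure.AbsolutelyContinuous.mk fun A _ hA0 => ?_
  rw [measure_eq_zero_iff_ae_notMem, ae_withDensity_iff (by fun_prop)] at hA0
  rw [measure_eq_zero_iff_ae_notMem]
  have hac : laguerreHeat a (s, x) ≪ volume := by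
    rw [laguerreHeat_apply]; exact withDensity_absolutelyContinuous _ _
  filter_upwards [hO, hac.ae_le hA0] with y hy hyA using hyA (gammaProd_ne_zero ha hy)

theorem gammaProd_mul_heatProd_symm (ha : ∀ j, 0 < a j) (hs : 0 < s) (hx : ∀ j, x j ≠ 0)
    (hy : ∀ j, y j ≠ 0) :
    gammaProd a x * heatProd a s x y = gammaProd a y * heatProd a s y x := by
  unfold gammaProd heatProd
  rw [← Finset.prod_mul_distrib, ← Finset.prod_mul_distrib]
  refine Finset.prod_congr rfl fun j _ => ?_
  rcases (hx j).lt_or_gt with hxj | hxj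
  · rw [ProbabilityTheory.gammaPDF_of_neg hxj, heatDensity_of_neg hxj, zero_mul, mul_zero]
  rcases (hy j).lt_or_gt with hyj | hyj
  · rw [ProbabilityTheory.gammaPDF_of_neg hyj, heatDensity_of_neg hyj, zero_mul, mul_zero]
  exact heatDensity_symm (ha j) hs hxj hyj

theorem isReversible_laguerreHeat (ha : ∀ j, 0 < a j) (hs : 0 < s) :
    ((laguerreHeat a).sectR s).IsReversible (volume.withDensity (gammaProd a)) := by
  have hdensity : ∀ {A B : Set (Fin d → ℝ)}, MeasurableSet A → MeasurableSet B →
      ∫⁻ x in A, (laguerreHeat a).sectR s x B ∂volume.withDensity (gammaProd a) =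
        ∫⁻ x in A, ∫⁻ y in B, gammaProd a x * heatProd a s x y := fun {A B} hA hB => by
    rw [restrict_withDensity hA, lintegral_withDensity_eq_lintegral_mul _ (by fun_prop)
      (Kernel.measurable_coe _ hB)]
    refine lintegral_congr fun x => ?_
    rw [Pi.mul_apply, Kernel.sectR_apply, laguerreHeat_apply' _ _ _ hB,
      lintegral_const_mul _ (by fun_prop)]
  intro A B hA hB
  rw [hdensity hA hB, hdensity hB hA, lintegral_lintegral_swap (by fun_prop)]
  refine lintegral_congr_ae ?_
  filter_upwards [ae_restrict_of_ae ae_forall_ne_zero] with y hy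
  refine lintegral_congr_ae ?_
  filter_upwards [ae_restrict_of_ae ae_forall_ne_zero] with x hx
  exact gammaProd_mul_heatProd_symm ha hs hx hy

end LaguerreHeat

/-! ### Boundary values -/

section Concentration

theorem exists_abs_sub_le_add_mul {E : Type*} {φ ψ : E → ℝ} {B b ε : ℝ} (hψ : ∀ z, 0 ≤ ψ z)
    (hB : ∀ z, |φ z - b| ≤ B) (h : Tendsto φ (comap ψ (𝓝 0)) (𝓝 b)) (hε : 0 < ε) :
    ∃ K, ∀ z, |φ z - b| ≤ ε + K * ψ z := by
  obtain ⟨U, hU, hUφ⟩ := h.eventually (Metric.closedBall_mem_nhds b hε)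
  obtain ⟨δ, hδ, hδU⟩ := Metric.mem_nhds_iff.1 hU
  refine ⟨B / δ, fun z => ?_⟩
  have hB0 : 0 ≤ B := (abs_nonneg _).trans (hB z)
  rcases lt_or_ge (ψ z) δ with hz | hz
  · have hclose : |φ z - b| ≤ ε :=
      hUφ (hδU (by simpa [abs_of_nonneg (hψ z)] using hz) : ψ z ∈ U)
    exact hclose.trans (le_add_of_nonneg_right (mul_nonneg (by positivity) (hψ z)))
  · have hfar : B ≤ B / δ * ψ z := by
      rw [div_mul_eq_mul_div, le_div_iff₀ hδ]
      gcongr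
    linarith [hB z]

theorem tendsto_integral_of_tendsto_comap {E ι : Type*} [MeasurableSpace E] {l : Filter ι}
    {μ : ι → Measure E} {φ ψ : E → ℝ} {B b : ℝ} (hμ : ∀ᶠ i in l, IsProbabilityMeasure (μ i))
    (hψ0 : ∀ z, 0 ≤ ψ z) (hψ : ∀ᶠ i in l, Integrable ψ (μ i))
    (hlim : Tendsto (fun i => ∫ z, ψ z ∂μ i) l (𝓝 0)) (hφ : Measurable φ) (hB : ∀ z, |φ z| ≤ B)
    (h : Tendsto φ (comap ψ (𝓝 0)) (𝓝 b)) :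
    Tendsto (fun i => ∫ z, φ z ∂μ i) l (𝓝 b) := by
  rw [Metric.tendsto_nhds]
  intro ε hε
  obtain ⟨K, hK⟩ := exists_abs_sub_le_add_mul hψ0
    (fun z => (abs_sub _ _).trans (add_le_add_left (hB z) _)) h (half_pos hε)
  have hsmall : ∀ᶠ i in l, K * ∫ z, ψ z ∂μ i < ε / 2 := by
    have := hlim.const_mul K
    rw [mul_zero] at this
    exact this.eventually_lt_const (half_pos hε)
  filter_upwards [hμ, hψ, hsmall] with i _ hψi hi
  have hφi : Integrable φ (μ i) := Integrable.of_bound hφ.aestronglyMeasurable B (ae_of_all _ hB)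
  calc dist (∫ z, φ z ∂μ i) b = |∫ z, (φ z - b) ∂μ i| := by
        rw [integral_sub hφi (integrable_const b), Real.dist_eq]
        simp
    _ ≤ ∫ z, (ε / 2 + K * ψ z) ∂μ i :=
        norm_integral_le_of_norm_le (f := fun z => φ z - b) (g := fun z => ε / 2 + K * ψ z)
          ((integrable_const _).add (hψi.const_mul K)) (ae_of_all _ hK)
    _ = ε / 2 + K * ∫ z, ψ z ∂μ i := by
        rw [integral_add (integrable_const _) (hψi.const_mul K), integral_const_mul]
        simp
    _ < ε := by linarith

end Concentration

section LaguerreBoundary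

variable {d : ℕ} {a : Fin d → ℝ} {s θ : ℝ} {x : Fin d → ℝ}

theorem integrable_exp_and_integral_exp_laguerreHeat (ha : ∀ j, 0 < a j) (hs : 0 < s) (hθ : 0 ≤ θ)
    (x : Fin d → ℝ) (j : Fin d) :
    Integrable (fun z => exp (-(θ * z j))) (laguerreHeat a (s, x)) ∧
      ∫ z, exp (-(θ * z j)) ∂laguerreHeat a (s, x) = (1 + θ * (1 - exp (-s))) ^ (-a j) *
        exp (-(θ * exp (-s) / (1 + θ * (1 - exp (-s))) * |x j|)) := by
  have hs' := one_sub_exp_neg_pos hs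
  have hL := (lintegral_comp_eval_laguerreHeat ha hs x
    (F := fun y => ENNReal.ofReal (exp (-(θ * y)))) (by fun_prop) j).trans
    (lintegral_exp_mul_heatDensity (ha j) hs hθ (x j))
  have hm : AEStronglyMeasurable (fun z : Fin d → ℝ => exp (-(θ * z j))) (laguerreHeat a (s, x)) :=
    (by fun_prop : Measurable fun z : Fin d → ℝ => exp (-(θ * z j))).aestronglyMeasurable
  have hpos : ∀ᵐ z ∂laguerreHeat a (s, x), 0 ≤ exp (-(θ * z j)) :=
    ae_of_all _ fun _ => (exp_pos _).le
  refine ⟨⟨hm, ?_⟩, ?_⟩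
  · rw [hasFiniteIntegral_iff_ofReal hpos, hL]
    exact ENNReal.ofReal_lt_top
  · rw [integral_eq_lintegral_of_nonneg_ae hpos hm, hL, ENNReal.toReal_ofReal (by positivity)]

theorem tendsto_integral_exp_laguerreHeat (ha : ∀ j, 0 < a j) (hθ : 0 ≤ θ) (x : Fin d → ℝ)
    (j : Fin d) : Tendsto (fun s => ∫ z, exp (-(θ * z j)) ∂laguerreHeat a (s, x)) (𝓝[>] 0)
      (𝓝 (exp (-(θ * |x j|)))) := by
  have hcont : ContinuousAt (fun s => (1 + θ * (1 - exp (-s))) ^ (-a j) *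
      exp (-(θ * exp (-s) / (1 + θ * (1 - exp (-s))) * |x j|))) 0 := by
    refine ContinuousAt.mul (ContinuousAt.rpow_const (by fun_prop) (Or.inl (by simp))) ?_
    have hdiv : ContinuousAt (fun s => θ * exp (-s) / (1 + θ * (1 - exp (-s)))) 0 :=
      ContinuousAt.div (by fun_prop) (by fun_prop) (by simp)
    fun_prop
  have hlim := hcont.tendsto.mono_left (nhdsWithin_le_nhds (s := Ioi 0))
  simp only [neg_zero, exp_zero, sub_self, mul_zero, add_zero, mul_one, div_one, one_rpow,
    one_mul] at hlim
  refine hlim.congr' ?_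
  filter_upwards [self_mem_nhdsWithin] with s hs
  exact (integrable_exp_and_integral_exp_laguerreHeat ha hs hθ x j).2.symm

/-- A smooth substitute for the squared distance from `z` to `x`, whose mean is read off the
Laplace transform. -/
noncomputable def expDistSq (x z : Fin d → ℝ) : ℝ := ∑ j, (exp (-z j) - exp (-x j)) ^ 2

theorem expDistSq_eq (x z : Fin d → ℝ) : expDistSq x z =
    ∑ j, (exp (-(2 * z j)) - 2 * exp (-x j) * exp (-(1 * z j)) + exp (-(2 * x j))) := by
  have hsq : ∀ r : ℝ, exp (-(2 * r)) = exp (-r) ^ 2 := fun r => by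
    rw [← exp_nat_mul]; push_cast; ring_nf
  refine Finset.sum_congr rfl fun j _ => ?_
  rw [hsq, hsq, one_mul]
  ring

theorem integrable_expDistSq (ha : ∀ j, 0 < a j) (hs : 0 < s) (x : Fin d → ℝ) :
    Integrable (expDistSq x) (laguerreHeat a (s, x)) := by
  have := (isMarkovSemigroup_laguerreHeat ha).isProbabilityMeasure hs x
  rw [funext (expDistSq_eq x)]
  exact integrable_finsetSum _ fun j _ =>
    ((integrable_exp_and_integral_exp_laguerreHeat ha hs zero_le_two x j).1.sub
      ((integrable_exp_and_integral_exp_laguerreHeat ha hs zero_le_one x j).1.const_mul _)).add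
      (integrable_const _)

theorem integral_expDistSq (ha : ∀ j, 0 < a j) (hs : 0 < s) (x : Fin d → ℝ) :
    ∫ z, expDistSq x z ∂laguerreHeat a (s, x) =
      ∑ j, (∫ z, exp (-(2 * z j)) ∂laguerreHeat a (s, x) -
        2 * exp (-x j) * ∫ z, exp (-(1 * z j)) ∂laguerreHeat a (s, x) + exp (-(2 * x j))) := by
  have := (isMarkovSemigroup_laguerreHeat ha).isProbabilityMeasure hs x
  have h2 := fun j => (integrable_exp_and_integral_exp_laguerreHeat ha hs zero_le_two x j).1
  have h1 := fun j =>
    ((integrable_exp_and_integral_exp_laguerreHeat ha hs zero_le_one x j).1).const_mul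
      (2 * exp (-x j))
  simp_rw [expDistSq_eq]
  refine (integral_finsetSum _ fun j _ => ((h2 j).sub (h1 j)).add (integrable_const _)).trans
    (Finset.sum_congr rfl fun j _ => ?_)
  rw [← integral_const_mul, ← integral_sub (h2 j) (h1 j)]
  refine (integral_add ((h2 j).sub (h1 j)) (integrable_const _)).trans ?_
  simp

theorem tendsto_integral_expDistSq (ha : ∀ j, 0 < a j) (hx : x ∈ posOrthant d) :
    Tendsto (fun s => ∫ z, expDistSq x z ∂laguerreHeat a (s, x)) (𝓝[>] 0) (𝓝 0) := by
  have hlim : ∀ j, Tendsto (fun s => ∫ z, exp (-(2 * z j)) ∂laguerreHeat a (s, x) -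
      2 * exp (-x j) * ∫ z, exp (-(1 * z j)) ∂laguerreHeat a (s, x) + exp (-(2 * x j)))
      (𝓝[>] 0) (𝓝 0) := fun j => by
    have hxj : 0 < x j := hx j (mem_univ j)
    have := ((tendsto_integral_exp_laguerreHeat ha zero_le_two x j).sub
      ((tendsto_integral_exp_laguerreHeat ha zero_le_one x j).const_mul (2 * exp (-x j)))).add_const
      (exp (-(2 * x j)))
    convert this using 2
    rw [abs_of_pos hxj, one_mul, mul_assoc, ← exp_add]
    ring_nf
  have hsum := tendsto_finsetSum Finset.univ fun j _ => hlim j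
  rw [Finset.sum_const_zero] at hsum
  refine hsum.congr' ?_
  filter_upwards [self_mem_nhdsWithin] with s hs using (integral_expDistSq ha hs x).symm

theorem tendsto_id_comap_expDistSq (x : Fin d → ℝ) :
    Tendsto id (comap (expDistSq x) (𝓝 0)) (𝓝 x) := by
  refine tendsto_pi_nhds.2 fun j => ?_
  have hsqrt : Tendsto (fun z => √(expDistSq x z)) (comap (expDistSq x) (𝓝 0)) (𝓝 0) := by
    have := (continuous_sqrt.tendsto 0).comp (tendsto_comap (f := expDistSq x) (x := 𝓝 0))
    rwa [sqrt_zero] at this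
  have hexp : Tendsto (fun z => exp (-z j) - exp (-x j)) (comap (expDistSq x) (𝓝 0)) (𝓝 0) :=
    squeeze_zero_norm (fun z => abs_le_sqrt (Finset.single_le_sum
      (f := fun j => (exp (-z j) - exp (-x j)) ^ 2) (fun j _ => sq_nonneg _)
      (Finset.mem_univ j))) hsqrt
  have hadd := hexp.add_const (exp (-x j))
  simp only [sub_add_cancel, zero_add] at hadd
  simpa using (hadd.log (exp_pos _).ne').neg

theorem tendsto_flowOrbit_laguerreHeat (ha : ∀ j, 0 < a j) (hx : x ∈ posOrthant d)
    {φ : (Fin d → ℝ) → ℝ} {B : ℝ} (hφ : Continuous φ) (hB : ∀ z, |φ z| ≤ B) :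
    Tendsto (flowOrbit (fun s x => laguerreHeat a (s, x)) φ x) (𝓝[>] 0) (𝓝 (φ x)) := by
  refine tendsto_integral_of_tendsto_comap (ψ := expDistSq x) ?_
    (fun z => Finset.sum_nonneg fun j _ => sq_nonneg _) ?_ (tendsto_integral_expDistSq ha hx)
    hφ.measurable hB ((hφ.tendsto x).comp (tendsto_id_comap_expDistSq x))
  · filter_upwards [self_mem_nhdsWithin] with s hs
    exact (isMarkovSemigroup_laguerreHeat ha).isProbabilityMeasure hs x
  · filter_upwards [self_mem_nhdsWithin] with s hs using integrable_expDistSq ha hs x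

end LaguerreBoundary

section SubordinationLimit

variable {E : Type*} [MeasurableSpace E] {H : Kernel (ℝ × E) E} {f : E → ℝ} {M c t : ℝ} {x : E}

theorem flowOrbit_subordinate_eq_integral_stableDensity_one (h : IsMarkovSemigroup H)
    (hf : Measurable f) (hM : ∀ z, |f z| ≤ M) (ht : 0 < t) (x : E) :
    flowOrbit (fun t x => subordinate H (t, x)) f x t = ∫ w in Ioi 0,
      stableDensity 1 w * flowOrbit (fun t x => H (t, x)) f x (t ^ 2 / (4 * w ^ 2)) := by
  have hsubst := integral_comp_mul_left_Ioi (fun w => stableDensity 1 w *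
    flowOrbit (fun t x => H (t, x)) f x (t ^ 2 / (4 * w ^ 2))) 0 ht
  rw [mul_zero, smul_eq_mul, eq_inv_mul_iff_mul_eq₀ ht.ne', ← integral_const_mul] at hsubst
  rw [flowOrbit_subordinate h hf hM ht x, ← hsubst]
  refine setIntegral_congr_fun measurableSet_Ioi fun v (hv : 0 < v) => ?_
  have harg : t ^ 2 / (4 * (t * v) ^ 2) = 1 / (4 * v ^ 2) := by field_simp
  rw [harg]
  simp only [stableDensity, one_mul]
  ring

theorem tendsto_flowOrbit_subordinate (h : IsMarkovSemigroup H) (hf : Measurable f)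
    (hM : ∀ z, |f z| ≤ M)
    (hc : Tendsto (flowOrbit (fun t x => H (t, x)) f x) (𝓝[>] 0) (𝓝 c)) :
    Tendsto (flowOrbit (fun t x => subordinate H (t, x)) f x) (𝓝[>] 0) (𝓝 c) := by
  set g := flowOrbit (fun t x => H (t, x)) f x
  have hg : Measurable g := (measurable_flowOrbit hf).comp measurable_prodMk_right
  have hlim : Tendsto (fun t => ∫ w in Ioi 0, stableDensity 1 w * g (t ^ 2 / (4 * w ^ 2)))
      (𝓝[>] 0) (𝓝 (∫ w in Ioi 0, stableDensity 1 w * c)) := by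
    refine tendsto_integral_filter_of_dominated_convergence (fun w => stableDensity 1 w * M)
      (Eventually.of_forall fun t => by fun_prop) ?_
      ((integrable_stableDensity one_pos).integrableOn.mul_const M) ?_
    · filter_upwards [self_mem_nhdsWithin] with t (ht : 0 < t)
      filter_upwards [ae_restrict_mem measurableSet_Ioi] with w (hw : 0 < w)
      have hpos := stableDensity_pos one_pos w
      rw [norm_mul, norm_of_nonneg hpos.le]
      exact mul_le_mul_of_nonneg_left (h.abs_flowOrbit_le hM (by positivity) x) hpos.le
    · filter_upwards [ae_restrict_mem measurableSet_Ioi] with w (hw : 0 < w)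
      refine (hc.comp (tendsto_nhdsWithin_iff.2 ⟨?_, ?_⟩)).const_mul _
      · have : Continuous fun t : ℝ => t ^ 2 / (4 * w ^ 2) := by fun_prop
        simpa using (this.tendsto 0).mono_left nhdsWithin_le_nhds
      · filter_upwards [self_mem_nhdsWithin] with t (ht : 0 < t)
        exact mem_Ioi.2 (by positivity)
  rw [integral_mul_const, integral_Ioi_stableDensity one_pos, one_mul] at hlim
  refine hlim.congr' ?_
  filter_upwards [self_mem_nhdsWithin] with t ht using
    (flowOrbit_subordinate_eq_integral_stableDensity_one h hf hM ht x).symm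

end SubordinationLimit

section Reversible

variable {E : Type*} [MeasurableSpace E] {γ : Measure E} [IsFiniteMeasure γ] {f g : E → ℝ} {M N : ℝ}

theorem integral_mul_integral_comm_of_isReversible {κ : Kernel E E} [IsMarkovKernel κ]
    (hκ : κ.IsReversible γ) (hf : Measurable f) (hM : ∀ x, |f x| ≤ M) (hg : Measurable g)
    (hN : ∀ x, |g x| ≤ N) :
    ∫ x, f x * ∫ y, g y ∂κ x ∂γ = ∫ x, (∫ y, f y ∂κ x) * g x ∂γ := by
  have hswap : (γ ⊗ₘ κ).map Prod.swap = γ ⊗ₘ κ := by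
    refine Measure.ext_prod fun hA hB => ?_
    rw [Measure.map_apply measurable_swap (hA.prod hB), preimage_swap_prod,
      Measure.compProd_apply_prod hB hA, Measure.compProd_apply_prod hA hB, hκ hB hA]
  have hint : ∀ {u v : E → ℝ} {M N : ℝ}, Measurable u → (∀ x, |u x| ≤ M) → Measurable v →
      (∀ x, |v x| ≤ N) → Integrable (fun p : E × E => u p.1 * v p.2) (γ ⊗ₘ κ) :=
    fun {u v M N} hu hM hv hN => Integrable.of_bound (by fun_prop) (M * N) (ae_of_all _ fun p => by
      rw [norm_mul]
      exact mul_le_mul (hM _) (hN _) (norm_nonneg _) ((abs_nonneg _).trans (hM p.1)))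
  calc ∫ x, f x * ∫ y, g y ∂κ x ∂γ = ∫ p, f p.1 * g p.2 ∂(γ ⊗ₘ κ) := by
        rw [Measure.integral_compProd (hint hf hM hg hN)]
        simp_rw [integral_const_mul]
    _ = ∫ p, g p.1 * f p.2 ∂(γ ⊗ₘ κ) := by
        conv_lhs => rw [← hswap]
        rw [integral_map measurable_swap.aemeasurable (by fun_prop)]
        simp only [Prod.fst_swap, Prod.snd_swap, mul_comm]
    _ = ∫ x, (∫ y, f y ∂κ x) * g x ∂γ := by
        rw [Measure.integral_compProd (hint hg hN hf hM)]
        simp_rw [integral_const_mul, mul_comm]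

theorem tendsto_integral_mul_of_tendsto {ι : Type*} {l : Filter ι} [l.IsCountablyGenerated]
    {u : ι → E → ℝ} (hf : Measurable f) (hM : ∀ x, |f x| ≤ M)
    (hu : ∀ i, Measurable (u i)) (hN : ∀ᶠ i in l, ∀ x, |u i x| ≤ N)
    (h : ∀ᵐ x ∂γ, Tendsto (fun i => u i x) l (𝓝 (g x))) :
    Tendsto (fun i => ∫ x, f x * u i x ∂γ) l (𝓝 (∫ x, f x * g x ∂γ)) := by
  refine tendsto_integral_filter_of_dominated_convergence (fun _ => M * N)
    (Eventually.of_forall fun i => by have := hu i; fun_prop) ?_ (integrable_const _)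
    (h.mono fun x hx => hx.const_mul _)
  filter_upwards [hN] with i hi
  refine ae_of_all _ fun x => ?_
  rw [norm_mul]
  exact mul_le_mul (hM x) (hi x) (norm_nonneg _) ((abs_nonneg _).trans (hM x))

variable {K : Kernel (ℝ × E) E}

-- Test against `φ`: by symmetry `∫ φ (K t f) = ∫ (K t φ) f`, where the left side tends to `∫ φ g`
-- and the right side to `∫ φ f`.
theorem ae_eq_of_tendsto_flowOrbit [NormedAddCommGroup E] [NormedSpace ℝ E] [FiniteDimensional ℝ E]
    [BorelSpace E] (hK : IsMarkovSemigroup K) (hrev : ∀ t > 0, (K.sectR t).IsReversible γ)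
    (hcont : ∀ (φ : E → ℝ) (B : ℝ), Continuous φ → (∀ z, |φ z| ≤ B) →
      ∀ᵐ x ∂γ, Tendsto (flowOrbit (fun t x => K (t, x)) φ x) (𝓝[>] 0) (𝓝 (φ x)))
    (hf : Measurable f) (hM : ∀ z, |f z| ≤ M)
    (hlim : ∀ x, Tendsto (flowOrbit (fun t x => K (t, x)) f x) (𝓝[>] 0) (𝓝 (g x))) :
    f =ᵐ[γ] g := by
  have hflow : ∀ {u : E → ℝ}, Measurable u → ∀ t,
      Measurable fun x => flowOrbit (fun t x => K (t, x)) u x t :=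
    fun hu t => (measurable_flowOrbit hu).comp measurable_prodMk_left
  have hbound : ∀ {u : E → ℝ} {N : ℝ}, (∀ z, |u z| ≤ N) →
      ∀ᶠ t in 𝓝[>] 0, ∀ x, |flowOrbit (fun t x => K (t, x)) u x t| ≤ N := fun hN => by
    filter_upwards [self_mem_nhdsWithin] with t ht x using hK.abs_flowOrbit_le hN ht x
  have hg : Measurable g :=
    measurable_of_tendsto_metrizable' (𝓝[>] 0) (hflow hf) (tendsto_pi_nhds.2 hlim)
  have hgM : ∀ x, |g x| ≤ M := fun x =>
    le_of_tendsto (hlim x).abs ((hbound hM).mono fun t ht => ht x)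
  have hloc : ∀ {u : E → ℝ}, Measurable u → (∀ z, |u z| ≤ M) → LocallyIntegrable u γ := fun hu hM =>
    (Integrable.of_bound hu.aestronglyMeasurable M (ae_of_all _ hM)).locallyIntegrable
  refine ae_eq_of_integral_contDiff_smul_eq (hloc hf hM) (hloc hg hgM) fun φ hφ hφc => ?_
  obtain ⟨B, hB⟩ := hφc.exists_bound_of_continuous hφ.continuous
  have hφm := hφ.continuous.measurable
  have htofg := tendsto_integral_mul_of_tendsto (γ := γ) hφm hB (hflow hf) (hbound hM)
    (ae_of_all _ hlim)
  have htoff := tendsto_integral_mul_of_tendsto (γ := γ) hf hM (hflow hφm) (hbound hB)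
    (hcont φ B hφ.continuous hB)
  have hsymm : ∀ t > 0, ∫ x, f x * flowOrbit (fun t x => K (t, x)) φ x t ∂γ =
      ∫ x, φ x * flowOrbit (fun t x => K (t, x)) f x t ∂γ := fun t ht => by
    have := hK.markov t ht
    simpa only [mul_comm, flowOrbit, Kernel.sectR_apply] using
      integral_mul_integral_comm_of_isReversible (hrev t ht) hf hM hφm hB
  simp only [smul_eq_mul]
  simp_rw [mul_comm (φ _) (f _)]
  refine tendsto_nhds_unique htoff (htofg.congr' ?_)
  filter_upwards [self_mem_nhdsWithin] with t ht using (hsymm t ht).symm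

end Reversible

theorem attainsBoundaryValues_subordinate_laguerreHeat {d : ℕ} {a : Fin d → ℝ}
    (ha : ∀ j, 0 < a j) :
    AttainsBoundaryValues fun t x => subordinate (laguerreHeat a) (t, x) := by
  intro f g M hf hM hlim t _ x
  have := isFiniteMeasure_withDensity_gammaProd ha
  have hH := isMarkovSemigroup_laguerreHeat ha
  refine (subordinate_absolutelyContinuous
    (fun s _ => laguerreHeat_absolutelyContinuous ha s x) t).ae_le ?_
  refine ae_eq_of_tendsto_flowOrbit hH.subordinate
    (fun s _ => isReversible_subordinate (fun s hs => isReversible_laguerreHeat ha hs) s)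
    (fun φ B hφ hB => ?_) hf hM hlim
  filter_upwards [ae_withDensity_gammaProd_mem_posOrthant a] with z hz
  exact tendsto_flowOrbit_subordinate hH hφ.measurable hB
    (tendsto_flowOrbit_laguerreHeat ha hz hφ hB)

/-! ### The Poisson–Laguerre kernel -/

theorem image_exp_neg_inv_sq_Ioi :
    (fun v : ℝ => exp (-(1 / (4 * v ^ 2)))) '' Ioi 0 = Ioo 0 1 := by
  ext r
  constructor
  · rintro ⟨v, hv, rfl⟩
    have hv : 0 < v := hv
    exact ⟨exp_pos _, exp_lt_one_iff.2 (neg_lt_zero.2 (by positivity))⟩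
  · rintro ⟨hr0, hr1⟩
    have hlog : 0 < -log r := neg_pos.2 (log_neg hr0 hr1)
    refine ⟨√(1 / (4 * -log r)), sqrt_pos.2 (by positivity), ?_⟩
    have harg : -(1 / (4 * √(1 / (4 * -log r)) ^ 2)) = log r := by
      rw [sq_sqrt (by positivity)]; field_simp
    simp only [harg, exp_log hr0]

theorem injOn_exp_neg_inv_sq : InjOn (fun v : ℝ => exp (-(1 / (4 * v ^ 2)))) (Ioi 0) := by
  intro v (hv : 0 < v) w (hw : 0 < w) h
  have hinv : 1 / (4 * v ^ 2) = 1 / (4 * w ^ 2) := neg_injective (exp_injective h)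
  field_simp at hinv
  exact ((sq_eq_sq₀ hw.le hv.le).1 hinv).symm

theorem integral_Ioo_eq_integral_exp_neg_inv_sq (F : ℝ → ℝ) :
    ∫ r in Ioo (0 : ℝ) 1, F r = ∫ v in Ioi (0 : ℝ),
      exp (-(1 / (4 * v ^ 2))) / (2 * v ^ 3) * F (exp (-(1 / (4 * v ^ 2)))) := by
  rw [← image_exp_neg_inv_sq_Ioi, integral_image_eq_integral_abs_deriv_smul measurableSet_Ioi
    (f' := fun v => exp (-(1 / (4 * v ^ 2))) / (2 * v ^ 3)) ?_ injOn_exp_neg_inv_sq]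
  · refine setIntegral_congr_fun measurableSet_Ioi fun v (hv : 0 < v) => ?_
    simp only [smul_eq_mul]
    rw [abs_of_pos (by positivity)]
  · intro v (hv : 0 < v)
    have hderiv := (((hasDerivAt_pow 2 v).const_mul 4).fun_inv (by positivity)).neg.exp
    refine (hderiv.congr_deriv ?_).hasDerivWithinAt.congr_of_eventuallyEq ?_ ?_
    · simp only [Pi.neg_apply, one_div]
      push_cast
      field_simp
      norm_num
    · exact Eventually.of_forall fun w => by simp
    · simp

section PoissonKernel

variable {d : ℕ} {α : Fin d → ℝ} {t : ℝ} {x y : Fin d → ℝ}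

/-- The density of the subordinated Laguerre heat kernel. It may be infinite at some points, so that
`plKernel`, given by a Bochner integral, agrees with it only almost everywhere. -/
noncomputable def poissonDensity (a : Fin d → ℝ) (t : ℝ) (x y : Fin d → ℝ) : ℝ≥0∞ :=
  ∫⁻ v in Ioi 0, ENNReal.ofReal (stableDensity t v) * heatProd a (1 / (4 * v ^ 2)) x y

theorem measurable_poissonDensity (a : Fin d → ℝ) (t : ℝ) (x : Fin d → ℝ) :
    Measurable (poissonDensity a t x) :=
  Measurable.lintegral_prod_right' (ν := volume.restrict (Ioi 0))
    (f := fun p : (Fin d → ℝ) × ℝ =>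
      ENNReal.ofReal (stableDensity t p.2) * heatProd a (1 / (4 * p.2 ^ 2)) x p.1) (by fun_prop)

theorem subordinate_laguerreHeat_eq_withDensity (a : Fin d → ℝ) (t : ℝ) (x : Fin d → ℝ) :
    subordinate (laguerreHeat a) (t, x) = volume.withDensity (poissonDensity a t x) := by
  have := sFinite_stableMeasure t
  ext A hA
  rw [subordinate_apply' _ _ _ hA, withDensity_apply _ hA]
  simp_rw [laguerreHeat_apply' _ _ _ hA]
  rw [lintegral_lintegral_swap (by fun_prop)]
  exact lintegral_congr fun y => lintegral_stableMeasure t (by fun_prop)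

theorem toReal_heatProd (hα : ∀ j, -1 < α j) {s : ℝ} (hs : 0 < s) (hx : x ∈ posOrthant d)
    (hy : y ∈ posOrthant d) : (heatProd (fun j => α j + 1) s x y).toReal =
      ((1 - exp (-s)) ^ d)⁻¹ * ∏ j, (y j / x j) ^ (α j / 2) *
        exp (-((exp (-s) * x j + y j) / (1 - exp (-s))) - α j * log (exp (-s)) / 2) *
        besselI (α j) (2 * √(exp (-s) * x j * y j) / (1 - exp (-s))) := by
  rw [heatProd, ENNReal.toReal_prod]
  simp_rw [toReal_heatDensity (hα _) hs (hx _ (mem_univ _)) (hy _ (mem_univ _))]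
  rw [Finset.prod_mul_distrib, Finset.prod_const, Finset.card_univ, Fintype.card_fin, inv_pow]

theorem plKernel_eq_integral_stableDensity (hα : ∀ j, -1 < α j) (t : ℝ) (hx : x ∈ posOrthant d)
    (hy : y ∈ posOrthant d) : plKernel d α t x y = ∫ v in Ioi 0,
      stableDensity t v * (heatProd (fun j => α j + 1) (1 / (4 * v ^ 2)) x y).toReal := by
  rw [plKernel, integral_Ioo_eq_integral_exp_neg_inv_sq, ← integral_const_mul]
  refine setIntegral_congr_fun measurableSet_Ioi fun v (hv : 0 < v) => ?_
  have hs : 0 < 1 / (4 * v ^ 2) := by positivity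
  have := sqrt_pos.2 pi_pos
  have hgap := pow_pos (one_sub_exp_neg_pos hs) d
  have hpow : (1 / (4 * v ^ 2)) ^ ((3 : ℝ) / 2) = 1 / (8 * v ^ 3) := by
    have hsq : 1 / (4 * v ^ 2) = (1 / (2 * v)) ^ (2 : ℝ) := by
      rw [rpow_two]; field_simp; norm_num
    rw [hsq, ← rpow_mul (by positivity)]
    norm_num
    field_simp
    norm_num
  have hexp : t ^ 2 / (4 * -(1 / (4 * v ^ 2))) = -(t * v) ^ 2 := by field_simp
  simp only [toReal_heatProd hα hs hx hy, stableDensity, log_exp, neg_neg]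
  rw [hexp, hpow]
  have hr := exp_pos (-(1 / (4 * v ^ 2)))
  generalize exp (-(1 / (4 * v ^ 2))) = r at *
  generalize ∏ j : Fin d, (_ : ℝ) = Q
  field_simp
  ring

theorem plKernel_eq_toReal_poissonDensity (hα : ∀ j, -1 < α j) (ht : 0 < t) (hx : x ∈ posOrthant d)
    (hy : y ∈ posOrthant d) (hfin : poissonDensity (fun j => α j + 1) t x y < ∞) :
    plKernel d α t x y = (poissonDensity (fun j => α j + 1) t x y).toReal := by
  rw [poissonDensity] at hfin ⊢
  rw [plKernel_eq_integral_stableDensity hα t hx hy,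
    ← integral_toReal (by fun_prop) (ae_lt_top (by fun_prop) hfin.ne)]
  simp_rw [ENNReal.toReal_mul, ENNReal.toReal_ofReal (stableDensity_pos ht _).le]

theorem measurableSet_posOrthant : MeasurableSet (posOrthant d) :=
  MeasurableSet.univ_pi fun _ => measurableSet_Ioi

/-- The Poisson–Laguerre semigroup as a family of probability measures. -/
noncomputable abbrev laguerrePoisson (α : Fin d → ℝ) (t : ℝ) (x : Fin d → ℝ) :
    Measure (Fin d → ℝ) :=
  subordinate (laguerreHeat fun j => α j + 1) (t, x)

theorem ae_laguerrePoisson_mem_posOrthant (hα : ∀ j, -1 < α j) (t : ℝ) (x : Fin d → ℝ) :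
    ∀ᵐ y ∂laguerrePoisson α t x, y ∈ posOrthant d :=
  have ha : ∀ j, 0 < α j + 1 := fun j => by linarith [hα j]
  (subordinate_absolutelyContinuous (fun s _ => laguerreHeat_absolutelyContinuous ha s x) t).ae_le
    (ae_withDensity_gammaProd_mem_posOrthant _)

theorem plP_eq_flowOrbit (hα : ∀ j, -1 < α j) (ht : 0 < t) (hx : x ∈ posOrthant d)
    (f : (Fin d → ℝ) → ℝ) : plP d α t f x =
      flowOrbit (laguerrePoisson α) f x t := by
  have ha : ∀ j, 0 < α j + 1 := fun j => by linarith [hα j]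
  have hm := measurable_poissonDensity (fun j => α j + 1) t x
  have hO := ae_laguerrePoisson_mem_posOrthant hα t x
  have hfin : ∀ᵐ y, poissonDensity (fun j => α j + 1) t x y < ∞ := by
    have := (isMarkovSemigroup_laguerreHeat ha).subordinate.isProbabilityMeasure ht x
    refine ae_lt_top hm ?_
    rw [← setLIntegral_univ, ← withDensity_apply _ MeasurableSet.univ,
      ← subordinate_laguerreHeat_eq_withDensity]
    exact measure_ne_top _ _
  rw [plP, if_neg ht.ne', flowOrbit, ← Measure.restrict_eq_self_of_ae_mem hO, laguerrePoisson,
    subordinate_laguerreHeat_eq_withDensity, restrict_withDensity measurableSet_posOrthant,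
    integral_withDensity_eq_integral_toReal_smul hm (ae_restrict_of_ae hfin)]
  refine setIntegral_congr_ae measurableSet_posOrthant ?_
  filter_upwards [hfin] with y hyfin hy
  rw [plKernel_eq_toReal_poissonDensity hα ht hx hy hyfin, smul_eq_mul]

end PoissonKernel

/-! ### The Laguerre fractional derivative -/

theorem fwdDiff_iter_zero_eq_sum (g : ℝ → ℝ) (k : ℕ) (s : ℝ) :
    (Δ_[s])^[k] g 0 = ∑ j ∈ Finset.range (k + 1),
      (k.choose j : ℝ) * (-1) ^ j * g (((k - j : ℕ) : ℝ) * s) := by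
  rw [fwdDiff_iter_eq_sum_shift, ← Finset.sum_range_reflect]
  refine Finset.sum_congr rfl fun j hj => ?_
  have hj' : j ≤ k := Nat.lt_succ_iff.1 (Finset.mem_range.1 hj)
  rw [show k + 1 - 1 - j = k - j by omega, Nat.sub_sub_self hj', Nat.choose_symm hj', zero_add,
    zsmul_eq_mul, nsmul_eq_mul]
  push_cast
  ring

section LaguerreFracDeriv

variable {d : ℕ} {α : Fin d → ℝ} {x : Fin d → ℝ} {t : ℝ}

/-- The normalizing constant `1 / c_λ^k` of the fractional derivative. -/
noncomputable def fracDerivNormalization (lam : ℝ) (k : ℕ) : ℝ :=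
  1 / ∫ u in Ioi (0 : ℝ), u ^ (-lam - 1) * (exp (-u) - 1) ^ k

theorem isAnalyticFlow_laguerrePoisson (hα : ∀ j, -1 < α j) :
    IsAnalyticFlow (laguerrePoisson α) 8 :=
  (isMarkovSemigroup_laguerreHeat fun j => by linarith [hα j]).isAnalyticFlow_subordinate

theorem laguerreFracDerivK_eq_flowFracDeriv (hα : ∀ j, -1 < α j) (lam : ℝ) (k : ℕ)
    (f : (Fin d → ℝ) → ℝ) (hx : x ∈ posOrthant d) : laguerreFracDerivK d α lam k f x =
      fracDerivNormalization lam k * flowFracDeriv (laguerrePoisson α) lam k f x := by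
  unfold laguerreFracDerivK flowFracDeriv fracIntegral fracDerivNormalization
  congr 1
  refine setIntegral_congr_fun measurableSet_Ioi fun s (hs : 0 < s) => ?_
  simp only [fwdDiff_iter_zero_eq_sum, smul_eq_mul, Function.update_apply]
  congr 1
  refine Finset.sum_congr rfl fun j _ => ?_
  congr 1
  split_ifs with h
  · rw [plP, if_pos h]
  · exact plP_eq_flowOrbit hα (lt_of_le_of_ne (by positivity) (Ne.symm h)) hx f

theorem iteratedDeriv_plP (hα : ∀ j, -1 < α j) (ht : 0 < t) (hx : x ∈ posOrthant d)
    (f : (Fin d → ℝ) → ℝ) (n : ℕ) : iteratedDeriv n (fun u => plP d α u f x) t =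
      iteratedDeriv n (flowOrbit (laguerrePoisson α) f x) t := by
  refine Filter.EventuallyEq.iteratedDeriv_eq n ?_
  filter_upwards [lt_mem_nhds ht] with u hu using plP_eq_flowOrbit hα hu hx f

theorem iteratedDeriv_plP_laguerreFracDerivK (hα : ∀ j, -1 < α j) (ht : 0 < t)
    (hx : x ∈ posOrthant d) (lam : ℝ) (k : ℕ) (f : (Fin d → ℝ) → ℝ) (n : ℕ) :
    iteratedDeriv n (fun u => plP d α u (laguerreFracDerivK d α lam k f) x) t =
      fracDerivNormalization lam k * iteratedDeriv n
        (flowOrbit (laguerrePoisson α) (flowFracDeriv (laguerrePoisson α) lam k f) x) t := by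
  rw [iteratedDeriv_plP hα ht hx, ← iteratedDeriv_const_mul_field]
  congr 1
  ext u
  rw [flowOrbit, flowOrbit, ← integral_const_mul]
  exact integral_congr_ae ((ae_laguerrePoisson_mem_posOrthant hα u x).mono fun y hy =>
    laguerreFracDerivK_eq_flowFracDeriv hα lam k f hy)

/-- Membership of `f` in the Laguerre Lipschitz space `Lip_β(μ_α)` with constant `A`, where `n`
derivatives are taken, together with the bound `‖f‖_∞ ≤ M`. -/
structure IsLaguerreLipschitz (α : Fin d → ℝ) (β : ℝ) (n : ℕ) (M A : ℝ) (f : (Fin d → ℝ) → ℝ) :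
    Prop where
  measurable : Measurable f
  bound : ∀ y, |f y| ≤ M
  deriv_bound : ∀ t > 0, ∀ x ∈ posOrthant d,
    |iteratedDeriv n (fun u => plP d α u f x) t| ≤ A * t ^ (β - n)

theorem IsLaguerreLipschitz.isFlowLipschitz {f : (Fin d → ℝ) → ℝ} {β M A : ℝ} {n : ℕ}
    (hα : ∀ j, -1 < α j) (hf : IsLaguerreLipschitz α β n M A f) :
    IsFlowLipschitz (laguerrePoisson α) β n M (A * 2 ^ (-(β - n))) f where
  measurable := hf.measurable
  bound := hf.bound
  deriv_bound := by
    have hflow := isAnalyticFlow_laguerrePoisson hα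
    have horbit := (hflow.isFlowOrbit hf.measurable hf.bound).iteratedDeriv hflow zero_le_one n
    refine (IsFlowOrbit.of_ae hflow horbit.measurable horbit.shift
      (fun t _ => ae_laguerrePoisson_mem_posOrthant hα t) fun t ht x hx => ?_).bound
    rw [← iteratedDeriv_plP hα ht hx]
    exact hf.deriv_bound t ht x hx

theorem exists_laguerreFracDerivK_bound (hα : ∀ j, -1 < α j) {lam β : ℝ} {m n : ℕ}
    (hlam : 0 < lam) (hlβ : lam < β) (hml : m ≤ lam) (hlm : lam < m + 1) (hβn : β ≤ n)
    (hmn : m + 1 ≤ n) :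
    ∃ C > 0, ∀ (f : (Fin d → ℝ) → ℝ) (M A : ℝ), IsLaguerreLipschitz α β n M A f →
      (∀ x ∈ posOrthant d, |laguerreFracDerivK d α lam (m + 1) f x| ≤ C * (M + A)) ∧
      ∀ t > 0, ∀ x ∈ posOrthant d,
        |iteratedDeriv n (fun u => plP d α u (laguerreFracDerivK d α lam (m + 1) f) x) t| ≤
          C * (M + A) * t ^ (β - lam - n) := by
  have ha : ∀ j, 0 < α j + 1 := fun j => by linarith [hα j]
  obtain ⟨K, hK, hfrac⟩ :=
    (isAnalyticFlow_laguerrePoisson hα).exists_isFlowLipschitz_flowFracDeriv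
      (attainsBoundaryValues_subordinate_laguerreHeat ha) hlam hlβ hml hlm hβn hmn
  set c := fracDerivNormalization lam (m + 1)
  set q : ℝ := 2 ^ (-(β - n))
  have hq : 0 < q := by positivity
  refine ⟨|c| * K * (1 + q) + 1, by positivity, fun f M A hf => ?_⟩
  have hflow := hf.isFlowLipschitz hα
  obtain ⟨hM, hAq⟩ := hflow.const_nonneg fun _ => 1
  have hA : 0 ≤ A := nonneg_of_mul_nonneg_left hAq hq
  have hconst : |c| * (K * (M + A * q)) ≤ (|c| * K * (1 + q) + 1) * (M + A) := by
    have hMA : M + A * q ≤ (1 + q) * (M + A) := by nlinarith [mul_nonneg hq.le hM]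
    have := mul_le_mul_of_nonneg_left hMA (by positivity : 0 ≤ |c| * K)
    linarith
  refine ⟨fun x hx => ?_, fun t ht x hx => ?_⟩
  · rw [laguerreFracDerivK_eq_flowFracDeriv hα _ _ _ hx, abs_mul]
    exact (mul_le_mul_of_nonneg_left ((hfrac f M _ hflow).bound x) (abs_nonneg c)).trans hconst
  · rw [iteratedDeriv_plP_laguerreFracDerivK hα ht hx, abs_mul]
    refine (mul_le_mul_of_nonneg_left ((hfrac f M _ hflow).deriv_bound t ht x)
      (abs_nonneg c)).trans ?_
    rw [← mul_assoc]
    exact mul_le_mul_of_nonneg_right hconst (rpow_nonneg ht.le _)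

end LaguerreFracDeriv

theorem laguerreFracDerivK_bounded_on_lipschitz_general
    (d : ℕ) (α : Fin d → ℝ) (hα : ∀ j, -1 < α j) (lam β : ℝ) (hlam : 0 < lam) (hlamβ : lam < β) :
    ∃ C > 0, ∀ (f : (Fin d → ℝ) → ℝ) (M A : ℝ), Measurable f → (∀ y, |f y| ≤ M) →
      (∀ t > (0 : ℝ), ∀ x ∈ posOrthant d,
        |iteratedDeriv (⌊β⌋₊ + 1) (fun u => plP d α u f x) t| ≤
          A * t ^ (β - ((⌊β⌋₊ : ℝ) + 1))) →
      (∀ x ∈ posOrthant d,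
        |laguerreFracDerivK d α lam (⌊lam⌋₊ + 1) f x| ≤ C * (M + A)) ∧
      (∀ t > (0 : ℝ), ∀ x ∈ posOrthant d,
        |iteratedDeriv (⌊β⌋₊ + 1)
            (fun u => plP d α u (laguerreFracDerivK d α lam (⌊lam⌋₊ + 1) f) x) t| ≤
          C * (M + A) * t ^ (β - lam - ((⌊β⌋₊ : ℝ) + 1))) := by
  simp only [← Nat.cast_succ, Nat.succ_eq_add_one]
  obtain ⟨C, hC, hbound⟩ := exists_laguerreFracDerivK_bound hα (m := ⌊lam⌋₊) (n := ⌊β⌋₊ + 1) hlam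
    hlamβ (Nat.floor_le hlam.le) (Nat.lt_floor_add_one lam)
    (by exact_mod_cast (Nat.lt_floor_add_one β).le)
    (Nat.succ_le_succ (Nat.floor_le_floor hlamβ.le))
  exact ⟨C, hC, fun f M A hf hM hA => hbound f M A ⟨hf, hM, hA⟩⟩

theorem laguerreFracDerivK_bounded_on_lipschitz
    (d : ℕ) (hd : 1 ≤ d) (α : Fin d → ℝ) (hα : ∀ j, -(1 / 2 : ℝ) < α j)
    (lam β : ℝ) (hlam : 1 ≤ lam) (hlamβ : lam < β) :
    ∃ C > 0, ∀ (f : (Fin d → ℝ) → ℝ) (M A : ℝ), Measurable f → (∀ y, |f y| ≤ M) →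
      (∀ t > (0 : ℝ), ∀ x ∈ posOrthant d,
        |iteratedDeriv (⌊β⌋₊ + 1) (fun u => plP d α u f x) t| ≤
          A * t ^ (β - ((⌊β⌋₊ : ℝ) + 1))) →
      (∀ x ∈ posOrthant d,
        |laguerreFracDerivK d α lam (⌊lam⌋₊ + 1) f x| ≤ C * (M + A)) ∧
      (∀ t > (0 : ℝ), ∀ x ∈ posOrthant d,
        |iteratedDeriv (⌊β⌋₊ + 1)
            (fun u => plP d α u (laguerreFracDerivK d α lam (⌊lam⌋₊ + 1) f) x) t| ≤
          C * (M + A) * t ^ (β - lam - ((⌊β⌋₊ : ℝ) + 1))) :=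
  laguerreFracDerivK_bounded_on_lipschitz_general d α (fun j => by linarith [hα j]) lam β
    (by linarith) hlamβ
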